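/- arXiv:2212.12203 — 7 statements merged into one kernel-verified Lean document; each statement's English description precedes it below -/
import Mathlib

section
/- Under Assumption LRD and assuming ∫_0^∞ r f(r) dr < ∞, for every φ ∈ L¹(ℝ^d) ∩ L^∞(ℝ^d) the integral c(φ) = ∫_{ℝ^d} ∫_{ℝ^d} φ(t₁) φ(t₂) ℓ((t₁ − t₂)/‖t₁ − t₂‖) ‖t₁ − t₂‖^{-d(α−1)} dt₁ dt₂ converges absolutely, and λ^{-d(3−α)} c_λ(φ) → c(φ) as λ → ∞, where c_λ(φ) = ∫_{ℝ^d} ∫_{ℝ^d} φ(t₁/λ) φ(t₂/λ) r_X(t₁ − t₂) dt₁ dt₂. -/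
/-!
Write `g(w) = Leb_d(Ξ ∩ (Ξ − w))`. By scaling, `r_X(t) = ∫ r g(r^{-1/d} t) f(r) dr`. Since `Ξ` is
bounded, `g` vanishes outside a ball of radius `D`, so only `r > (‖t‖ / D)^d` contributes; together with the
tail of `f` and the finiteness of `∫ r f(r) dr` this yields `r_X(t) ≤ C ‖t‖^{-d(α-1)}` for *all*
`t ≠ 0` (`exists_grainCov_le`). Substituting `r = λ^d ‖t‖^d s` and applying dominated convergence
gives `λ^{d(α-1)} r_X(λ t) → ℓ(t/‖t‖) ‖t‖^{-d(α-1)}` (`tendsto_grainCov_scaled`).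

After the change of variables `t_i ↦ λ t_i`, the normalised form `λ^{-d(3-α)} c_λ(φ)` is the integral
of `φ(t₁) φ(t₂)` against the kernel `λ^{d(α-1)} r_X(λ(t₁ − t₂))`. This kernel converges off the
diagonal and, by the global bound, is dominated uniformly in `λ` by a multiple of the Riesz kernel
`‖t₁ − t₂‖^{-d(α-1)}`, which is integrable against `|φ| ⊗ |φ|` because `d(α-1) < d`
(`integrable_riesz`). A second dominated convergence concludes; the limit kernel inherits
measurability and the bound from the approximating kernels, whence its integrability.
-/

open scoped BigOperators Pointwise
open MeasureTheory Filter Topology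

/-- Covariance function `r_X(t)` of the random grain model:
`r_X(t) = ∫_0^∞ Leb_d(r^{1/d} Ξ⁰ ∩ (r^{1/d} Ξ⁰ − t)) f(r) dr`. -/
noncomputable def grainCov (d : ℕ) (Ξ : Set (EuclideanSpace ℝ (Fin d))) (f : ℝ → ℝ)
    (t : EuclideanSpace ℝ (Fin d)) : ℝ :=
  ∫ r in Set.Ioi (0 : ℝ),
    (volume ((r ^ ((1 : ℝ) / d)) • Ξ ∩ ((· + t) ⁻¹' ((r ^ ((1 : ℝ) / d)) • Ξ)))).toReal * f r

/-- Angular function `ℓ(z) = c_f ∫_0^∞ Leb_d(Ξ⁰ ∩ (Ξ⁰ − r^{-1/d} z)) r^{-α} dr`. -/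
noncomputable def angularFun (d : ℕ) (Ξ : Set (EuclideanSpace ℝ (Fin d))) (cf α : ℝ)
    (z : EuclideanSpace ℝ (Fin d)) : ℝ :=
  cf * ∫ r in Set.Ioi (0 : ℝ),
    (volume (Ξ ∩ ((· + (r ^ (-(1 : ℝ) / d)) • z) ⁻¹' Ξ))).toReal * r ^ (-α)

/-! ### The overlap function of the grain -/

/-- The overlap volume `Leb_d(Ξ ∩ (Ξ − w))`, also called the geometric covariogram of `Ξ`. -/
noncomputable def overlap {d : ℕ} (Ξ : Set (EuclideanSpace ℝ (Fin d)))
    (w : EuclideanSpace ℝ (Fin d)) : ℝ :=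
  (volume (Ξ ∩ ((· + w) ⁻¹' Ξ))).toReal

section Overlap

variable {d : ℕ} {Ξ : Set (EuclideanSpace ℝ (Fin d))}

lemma overlap_nonneg (w : EuclideanSpace ℝ (Fin d)) : 0 ≤ overlap Ξ w := ENNReal.toReal_nonneg

lemma overlap_le (hb : Bornology.IsBounded Ξ) (w : EuclideanSpace ℝ (Fin d)) :
    overlap Ξ w ≤ (volume Ξ).toReal :=
  ENNReal.toReal_mono hb.measure_lt_top.ne (measure_mono Set.inter_subset_left)

lemma measurable_overlap (hm : MeasurableSet Ξ) : Measurable (overlap Ξ) := by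
  have hs : MeasurableSet {q : EuclideanSpace ℝ (Fin d) × EuclideanSpace ℝ (Fin d) |
      q.2 ∈ Ξ ∧ q.2 + q.1 ∈ Ξ} :=
    (measurable_snd hm).inter ((measurable_snd.add measurable_fst) hm)
  exact (measurable_measure_prodMk_left (ν := volume) hs).ennreal_toReal

lemma exists_overlap_eq_zero (hb : Bornology.IsBounded Ξ) :
    ∃ D : ℝ, 0 < D ∧ ∀ w, D ≤ ‖w‖ → overlap Ξ w = 0 := by
  obtain ⟨D, hD, hsub⟩ := hb.subset_ball_lt 0 0
  refine ⟨2 * D, by positivity, fun w hw => ?_⟩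
  have : Ξ ∩ ((· + w) ⁻¹' Ξ) = ∅ := by
    ext u
    simp only [Set.mem_inter_iff, Set.mem_preimage, Set.mem_empty_iff_false, iff_false, not_and]
    intro h1 h2
    have h1 := hsub h1
    have h2 := hsub h2
    rw [mem_ball_zero_iff] at h1 h2
    have : ‖w‖ ≤ ‖u + w‖ + ‖u‖ := by
      simpa using norm_sub_le (u + w) u
    linarith
  simp [overlap, this]

end Overlap

/-! ### Scaling of the covariance -/

lemma volume_inter_smul {d : ℕ} (Ξ : Set (EuclideanSpace ℝ (Fin d))) {c : ℝ} (hc : 0 < c)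
    (t : EuclideanSpace ℝ (Fin d)) :
    (volume ((c • Ξ) ∩ ((· + t) ⁻¹' (c • Ξ)))).toReal = c ^ d * overlap Ξ (c⁻¹ • t) := by
  have : (c • Ξ) ∩ ((· + t) ⁻¹' (c • Ξ)) = c • (Ξ ∩ ((· + c⁻¹ • t) ⁻¹' Ξ)) := by
    ext u
    simp [Set.mem_smul_set_iff_inv_smul_mem₀ hc.ne', smul_add]
  rw [this, Measure.addHaar_smul, ENNReal.toReal_mul, overlap, finrank_euclideanSpace_fin,
    abs_of_pos (pow_pos hc d), ENNReal.toReal_ofReal (pow_pos hc d).le]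

/-- Pulling the dilation `r^{1/d}` out of the volume turns `r_X` into an integral of the overlap
function of the unit grain. -/
lemma grainCov_eq {d : ℕ} (hd : 1 ≤ d) (Ξ : Set (EuclideanSpace ℝ (Fin d))) (f : ℝ → ℝ)
    (t : EuclideanSpace ℝ (Fin d)) :
    grainCov d Ξ f t =
      ∫ r in Set.Ioi (0 : ℝ), r * overlap Ξ ((r ^ (-(1 : ℝ) / d)) • t) * f r := by
  refine setIntegral_congr_fun measurableSet_Ioi fun r (hr : 0 < r) => ?_
  have h1 : (r ^ ((1 : ℝ) / d)) ^ d = r := by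
    rw [one_div, Real.rpow_inv_natCast_pow hr.le (by omega)]
  have h2 : (r ^ ((1 : ℝ) / d))⁻¹ = r ^ (-(1 : ℝ) / d) := by
    rw [← Real.rpow_neg hr.le, neg_div]
  rw [volume_inter_smul Ξ (Real.rpow_pos_of_pos hr _) t, h1, h2]

/-- Grains of size `r ≤ (y / D)^d` are too small to reach across a distance `y`. -/
lemma le_rpow_mul_of_le {d : ℕ} (hd : 1 ≤ d) {r y D : ℝ} (hr : 0 < r) (hD : 0 < D) (hy : 0 < y)
    (h : r ≤ (y / D) ^ d) : D ≤ r ^ (-(1 : ℝ) / d) * y := by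
  have hd0 : (0 : ℝ) < d := by exact_mod_cast hd
  have h1 : r ^ ((d : ℝ)⁻¹) ≤ y / D := by
    calc r ^ ((d : ℝ)⁻¹) ≤ ((y / D) ^ d) ^ ((d : ℝ)⁻¹) :=
          Real.rpow_le_rpow hr.le h (by positivity)
      _ = y / D := Real.pow_rpow_inv_natCast (by positivity) (by omega)
  have h2 : r ^ (-(1 : ℝ) / d) = (r ^ ((d : ℝ)⁻¹))⁻¹ := by
    rw [← Real.rpow_neg hr.le, neg_div, one_div]
  have h3 : 0 < r ^ ((d : ℝ)⁻¹) := Real.rpow_pos_of_pos hr _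
  rw [h2, inv_mul_eq_div, le_div_iff₀ h3]
  rw [le_div_iff₀ hD] at h1
  linarith

lemma measurable_grainCov {d : ℕ} (hd : 1 ≤ d) {Ξ : Set (EuclideanSpace ℝ (Fin d))}
    (hm : MeasurableSet Ξ) {f : ℝ → ℝ} (hf : Measurable f) : Measurable (grainCov d Ξ f) := by
  have : grainCov d Ξ f = fun t =>
      ∫ r in Set.Ioi (0 : ℝ), r * overlap Ξ ((r ^ (-(1 : ℝ) / d)) • t) * f r :=
    funext fun t => grainCov_eq hd Ξ f t
  rw [this]
  refine (StronglyMeasurable.integral_prod_right (f := fun t r =>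
    r * overlap Ξ ((r ^ (-(1 : ℝ) / d)) • t) * f r) ?_).measurable
  have h1 : Measurable fun q : EuclideanSpace ℝ (Fin d) × ℝ =>
      overlap Ξ ((q.2 ^ (-(1 : ℝ) / d)) • q.1) :=
    (measurable_overlap hm).comp ((measurable_snd.pow_const _).smul measurable_fst)
  exact ((measurable_snd.mul h1).mul (hf.comp measurable_snd)).stronglyMeasurable

/-! ### Global upper bound on the covariance -/

/-- The regular variation hypothesis enters the domination arguments only through this bound. -/
lemma eventually_tail_le {α cf : ℝ} (hcf : 0 < cf) {f : ℝ → ℝ}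
    (hftail : Tendsto (fun r : ℝ => f r / (cf * r ^ (-1 - α))) atTop (𝓝 1)) :
    ∃ R : ℝ, 0 < R ∧ ∀ r, R ≤ r → f r ≤ 2 * cf * r ^ (-1 - α) := by
  have h := (hftail.eventually (gt_mem_nhds (show (1 : ℝ) < 2 by norm_num)))
  obtain ⟨R, hR⟩ := eventually_atTop.1 h
  refine ⟨max R 1, by positivity, fun r hr => ?_⟩
  have hr0 : 0 < r := lt_of_lt_of_le one_pos ((le_max_right _ _).trans hr)
  have := hR r ((le_max_left _ _).trans hr)
  rw [div_lt_iff₀ (mul_pos hcf (Real.rpow_pos_of_pos hr0 _))] at this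
  linarith

/-- The truncated first moment of `f` is dominated by its asymptotic order `x^{1-α}` for every
`x > 0`, not only for large `x`: near `0` it is bounded while `x^{1-α}` blows up. -/
lemma exists_tail_moment_le {α cf : ℝ} (hα₁ : 1 < α) (hcf : 0 < cf) {f : ℝ → ℝ}
    (hfnonneg : ∀ r, 0 ≤ f r)
    (hftail : Tendsto (fun r : ℝ => f r / (cf * r ^ (-1 - α))) atTop (𝓝 1))
    (hfint : IntegrableOn (fun r => r * f r) (Set.Ioi (0 : ℝ))) :
    ∃ C : ℝ, 0 ≤ C ∧ ∀ x, 0 < x → ∫ r in Set.Ioi x, r * f r ≤ C * x ^ (1 - α) := by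
  obtain ⟨R, hR0, hR⟩ := eventually_tail_le hcf hftail
  set M := ∫ r in Set.Ioi (0 : ℝ), r * f r with hM
  have hM0 : 0 ≤ M := setIntegral_nonneg measurableSet_Ioi fun r (hr : 0 < r) =>
    mul_nonneg hr.le (hfnonneg r)
  have hα : 0 < α - 1 := by linarith
  have hA : 0 ≤ 2 * cf / (α - 1) := by positivity
  have hB : 0 ≤ M * R ^ (α - 1) := mul_nonneg hM0 (Real.rpow_nonneg hR0.le _)
  refine ⟨2 * cf / (α - 1) + M * R ^ (α - 1), add_nonneg hA hB, fun x hx => ?_⟩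
  have hx1 : 0 < x ^ (1 - α) := Real.rpow_pos_of_pos hx _
  rcases le_or_gt R x with hRx | hRx
  · have hint : IntegrableOn (fun r : ℝ => 2 * cf * r ^ (-α)) (Set.Ioi x) :=
      (integrableOn_Ioi_rpow_of_lt (by linarith) hx).const_mul _
    have h1 : ∫ r in Set.Ioi x, r * f r ≤ ∫ r in Set.Ioi x, 2 * cf * r ^ (-α) := by
      refine setIntegral_mono_on (hfint.mono_set (Set.Ioi_subset_Ioi hx.le)) hint
        measurableSet_Ioi fun r (hr : x < r) => ?_
      have hr0 : 0 < r := hx.trans hr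
      calc r * f r ≤ r * (2 * cf * r ^ (-1 - α)) :=
            mul_le_mul_of_nonneg_left (hR r (hRx.trans hr.le)) hr0.le
        _ = 2 * cf * (r ^ (1 : ℝ) * r ^ (-1 - α)) := by rw [Real.rpow_one]; ring
        _ = 2 * cf * r ^ (-α) := by rw [← Real.rpow_add hr0]; ring_nf
    have h2 : ∫ r in Set.Ioi x, 2 * cf * r ^ (-α) = 2 * cf / (α - 1) * x ^ (1 - α) := by
      rw [integral_const_mul, integral_Ioi_rpow_of_lt (by linarith) hx,
        show -α + 1 = -(α - 1) by ring, show 1 - α = -(α - 1) by ring, neg_div_neg_eq]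
      ring
    rw [add_mul]
    have := mul_nonneg hB hx1.le
    linarith
  · have h1 : ∫ r in Set.Ioi x, r * f r ≤ M := by
      refine setIntegral_mono_set hfint ?_ (Set.Ioi_subset_Ioi hx.le).eventuallyLE
      refine (ae_restrict_iff' measurableSet_Ioi).2 (Eventually.of_forall fun r hr => ?_)
      exact mul_nonneg (le_of_lt hr) (hfnonneg r)
    have h2 : 1 ≤ R ^ (α - 1) * x ^ (1 - α) := by
      rw [show 1 - α = -(α - 1) by ring, Real.rpow_neg hx.le, ← div_eq_mul_inv,
        ← Real.div_rpow hR0.le hx.le]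
      exact Real.one_le_rpow ((one_le_div hx).2 hRx.le) hα.le
    have h3 : M * 1 ≤ M * (R ^ (α - 1) * x ^ (1 - α)) := mul_le_mul_of_nonneg_left h2 hM0
    rw [add_mul]
    have := mul_nonneg hA hx1.le
    linarith

/-- Global Riesz-type bound on the covariance. Only grains with `r > (‖t‖ / D)^d` overlap their
translate by `t`, so the covariance is controlled by the truncated first moment of `f`. -/
lemma exists_grainCov_le {d : ℕ} (hd : 1 ≤ d) {Ξ : Set (EuclideanSpace ℝ (Fin d))}
    (hΞbdd : Bornology.IsBounded Ξ) {α cf : ℝ} (hα₁ : 1 < α) (hcf : 0 < cf) {f : ℝ → ℝ}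
    (hfnonneg : ∀ r, 0 ≤ f r)
    (hftail : Tendsto (fun r : ℝ => f r / (cf * r ^ (-1 - α))) atTop (𝓝 1))
    (hfint : IntegrableOn (fun r => r * f r) (Set.Ioi (0 : ℝ))) :
    ∃ C : ℝ, 0 ≤ C ∧ ∀ t, t ≠ 0 → |grainCov d Ξ f t| ≤ C * ‖t‖ ^ (-(d : ℝ) * (α - 1)) := by
  obtain ⟨C, hC0, hC⟩ := exists_tail_moment_le hα₁ hcf hfnonneg hftail hfint
  obtain ⟨D, hD0, hD⟩ := exists_overlap_eq_zero hΞbdd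
  set V := (volume Ξ).toReal
  have hV : 0 ≤ V := ENNReal.toReal_nonneg
  refine ⟨V * C * (D ^ (-(d : ℝ) * (α - 1)))⁻¹, by positivity, fun t ht => ?_⟩
  have ht0 : 0 < ‖t‖ := norm_pos_iff.2 ht
  set x := (‖t‖ / D) ^ d with hx
  have hx0 : 0 < x := by positivity
  have hnn : ∀ r ∈ Set.Ioi (0 : ℝ),
      0 ≤ r * overlap Ξ ((r ^ (-(1 : ℝ) / d)) • t) * f r := fun r hr =>
    mul_nonneg (mul_nonneg (le_of_lt hr) (overlap_nonneg _)) (hfnonneg r)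
  rw [grainCov_eq hd, abs_of_nonneg (setIntegral_nonneg measurableSet_Ioi hnn)]
  have hint : Integrable ((Set.Ioi x).indicator fun r => V * (r * f r)) :=
    (integrable_indicator_iff measurableSet_Ioi).2
      ((hfint.mono_set (Set.Ioi_subset_Ioi hx0.le)).const_mul V)
  have h1 : ∫ r in Set.Ioi (0 : ℝ), r * overlap Ξ ((r ^ (-(1 : ℝ) / d)) • t) * f r ≤
      ∫ r in Set.Ioi (0 : ℝ), (Set.Ioi x).indicator (fun r => V * (r * f r)) r := by
    refine integral_mono_of_nonneg
      ((ae_restrict_iff' measurableSet_Ioi).2 (Eventually.of_forall hnn)) hint.integrableOn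
      ((ae_restrict_iff' measurableSet_Ioi).2 (Eventually.of_forall fun r (hr : 0 < r) => ?_))
    by_cases hrx : x < r
    · simp only [Set.indicator_of_mem (show r ∈ Set.Ioi x from hrx)]
      have := mul_le_mul_of_nonneg_left (overlap_le hΞbdd ((r ^ (-(1 : ℝ) / d)) • t))
        (mul_nonneg hr.le (hfnonneg r))
      linarith
    · simp only [Set.indicator_of_notMem (show r ∉ Set.Ioi x from hrx)]
      rw [hD]
      · simp
      · rw [norm_smul, Real.norm_of_nonneg (Real.rpow_nonneg hr.le _)]
        exact le_rpow_mul_of_le hd hr hD0 ht0 (not_lt.1 hrx)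
  have h2 : ∫ r in Set.Ioi (0 : ℝ), (Set.Ioi x).indicator (fun r => V * (r * f r)) r =
      V * ∫ r in Set.Ioi x, r * f r := by
    rw [setIntegral_indicator measurableSet_Ioi, integral_const_mul,
      Set.inter_eq_right.2 (Set.Ioi_subset_Ioi hx0.le)]
  have h3 : x ^ (1 - α) = (D ^ (-(d : ℝ) * (α - 1)))⁻¹ * ‖t‖ ^ (-(d : ℝ) * (α - 1)) := by
    rw [hx, ← Real.rpow_natCast, ← Real.rpow_mul (by positivity),
      show (d : ℝ) * (1 - α) = -(d : ℝ) * (α - 1) by ring, Real.div_rpow ht0.le hD0.le,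
      div_eq_mul_inv, mul_comm]
  calc _ ≤ V * ∫ r in Set.Ioi x, r * f r := h1.trans h2.le
    _ ≤ V * (C * x ^ (1 - α)) := mul_le_mul_of_nonneg_left (hC x hx0) hV
    _ = _ := by rw [h3]; ring

/-! ### Pointwise limit of the rescaled covariance -/

/-- Asymptotics of `r_X` along rays, with `x = ρ^d` as the large parameter: substituting `r = x s`
makes the density appear as `(x s)^{1+α} f(x s) → c_f`. -/
lemma tendsto_grainCov_ray {d : ℕ} (hd : 1 ≤ d) {Ξ : Set (EuclideanSpace ℝ (Fin d))}
    (hΞmeas : MeasurableSet Ξ) (hΞbdd : Bornology.IsBounded Ξ)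
    {α cf : ℝ} (hα₁ : 1 < α) (hcf : 0 < cf) {f : ℝ → ℝ} (hfmeas : Measurable f)
    (hfnonneg : ∀ r, 0 ≤ f r)
    (hftail : Tendsto (fun r : ℝ => f r / (cf * r ^ (-1 - α))) atTop (𝓝 1))
    {z : EuclideanSpace ℝ (Fin d)} (hz : ‖z‖ = 1) :
    Tendsto (fun x : ℝ => x ^ (α - 1) * grainCov d Ξ f ((x ^ ((1 : ℝ) / d)) • z)) atTop
      (𝓝 (angularFun d Ξ cf α z)) := by
  obtain ⟨R, hR0, hR⟩ := eventually_tail_le hcf hftail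
  obtain ⟨D, hD0, hD⟩ := exists_overlap_eq_zero hΞbdd
  set V := (volume Ξ).toReal
  have hV : 0 ≤ V := ENNReal.toReal_nonneg
  set g : ℝ → ℝ := fun s => overlap Ξ ((s ^ (-(1 : ℝ) / d)) • z) with hg
  have hgm : Measurable g :=
    (measurable_overlap hΞmeas).comp ((measurable_id.pow_const _).smul_const z)
  set F : ℝ → ℝ → ℝ := fun x s => x ^ (1 + α) * (s * g s * f (x * s)) with hF
  have key : ∀ x : ℝ, 0 < x →
      x ^ (α - 1) * grainCov d Ξ f ((x ^ ((1 : ℝ) / d)) • z) =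
        ∫ s in Set.Ioi (0 : ℝ), F x s := by
    intro x hx
    have h1 := integral_comp_mul_left_Ioi (fun r => r * overlap Ξ ((r ^ (-(1 : ℝ) / d)) •
      ((x ^ ((1 : ℝ) / d)) • z)) * f r) 0 hx
    rw [mul_zero, smul_eq_mul, ← grainCov_eq hd, eq_inv_mul_iff_mul_eq₀ hx.ne',
      ← integral_const_mul] at h1
    rw [← h1, ← integral_const_mul]
    refine setIntegral_congr_fun measurableSet_Ioi fun s (hs : 0 < s) => ?_
    have h2 : (x * s) ^ (-(1 : ℝ) / d) * x ^ ((1 : ℝ) / d) = s ^ (-(1 : ℝ) / d) := by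
      rw [Real.mul_rpow hx.le hs.le, mul_right_comm, ← Real.rpow_add hx, neg_div,
        neg_add_cancel, Real.rpow_zero, one_mul]
    have h3 : x ^ (1 + α) = x ^ (α - 1) * x * x := by
      rw [show 1 + α = α - 1 + 1 + 1 by ring, Real.rpow_add_one hx.ne', Real.rpow_add_one hx.ne']
    simp only [hF, hg, smul_smul, h2, h3]
    ring
  have hlim : angularFun d Ξ cf α z = ∫ s in Set.Ioi (0 : ℝ), cf * (g s * s ^ (-α)) := by
    rw [integral_const_mul]; rfl
  rw [hlim]
  refine Tendsto.congr' ((eventually_gt_atTop 0).mono fun x hx => (key x hx).symm) ?_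
  -- the cutoff below which the unit grain of size `s` does not meet its translate by `z`
  set s₀ := (1 / D) ^ d with hs₀
  have hs₀0 : 0 < s₀ := by positivity
  have hg0 : ∀ s, 0 < s → s ≤ s₀ → g s = 0 := by
    intro s hs hle
    refine hD _ ?_
    rw [norm_smul, Real.norm_of_nonneg (Real.rpow_nonneg hs.le _), hz]
    exact le_rpow_mul_of_le hd hs hD0 one_pos hle
  -- bookkeeping of the powers of `x` and `s`
  have hpow : ∀ x s : ℝ, 0 < x → 0 < s → x ^ (1 + α) * (s * (x * s) ^ (-1 - α)) = s ^ (-α) := by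
    intro x s hx hs
    have : x ^ (1 + α) * x ^ (-1 - α) = 1 := by
      rw [← Real.rpow_add hx]; simp
    have h' : s * s ^ (-1 - α) = s ^ (-α) := by
      rw [mul_comm, ← Real.rpow_add_one hs.ne']; ring_nf
    rw [Real.mul_rpow hx.le hs.le, ← h']
    linear_combination (s * s ^ (-1 - α)) * this
  refine tendsto_integral_filter_of_dominated_convergence
    ((Set.Ioi s₀).indicator fun s => 2 * cf * V * s ^ (-α)) ?_ ?_ ?_ ?_
  · refine Eventually.of_forall fun x => Measurable.aestronglyMeasurable ?_
    exact ((measurable_id.mul hgm).mul (hfmeas.comp (measurable_id.const_mul x))).const_mul _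
  · filter_upwards [eventually_gt_atTop (0 : ℝ), eventually_ge_atTop (R / s₀)] with x hx hxR
    refine (ae_restrict_iff' measurableSet_Ioi).2 (Eventually.of_forall fun s (hs : 0 < s) => ?_)
    by_cases hss : s₀ < s
    · rw [Set.indicator_of_mem (show s ∈ Set.Ioi s₀ from hss), Real.norm_of_nonneg]
      · have hxs : R ≤ x * s := by
          rw [div_le_iff₀ hs₀0] at hxR
          exact hxR.trans (mul_le_mul_of_nonneg_left hss.le hx.le)
        have h1 : g s * f (x * s) ≤ V * (2 * cf * (x * s) ^ (-1 - α)) :=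
          mul_le_mul (overlap_le hΞbdd _) (hR _ hxs) (hfnonneg _) hV
        calc F x s = x ^ (1 + α) * s * (g s * f (x * s)) := by simp only [hF]; ring
          _ ≤ x ^ (1 + α) * s * (V * (2 * cf * (x * s) ^ (-1 - α))) := by gcongr
          _ = 2 * cf * V * (x ^ (1 + α) * (s * (x * s) ^ (-1 - α))) := by ring
          _ = _ := by rw [hpow x s hx hs]
      · exact mul_nonneg (Real.rpow_nonneg hx.le _)
          (mul_nonneg (mul_nonneg hs.le (overlap_nonneg _)) (hfnonneg _))
    · rw [Set.indicator_of_notMem (show s ∉ Set.Ioi s₀ from hss)]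
      simp [hF, hg0 s hs (not_lt.1 hss)]
  · exact ((integrable_indicator_iff measurableSet_Ioi).2
      ((integrableOn_Ioi_rpow_of_lt (by linarith) hs₀0).const_mul _)).integrableOn
  · refine (ae_restrict_iff' measurableSet_Ioi).2 (Eventually.of_forall fun s (hs : 0 < s) => ?_)
    have h1 : Tendsto (fun x : ℝ => f (x * s) / (cf * (x * s) ^ (-1 - α))) atTop (𝓝 1) :=
      hftail.comp (tendsto_id.atTop_mul_const hs)
    have h2 := h1.mul_const (cf * (g s * s ^ (-α)))
    rw [one_mul] at h2
    refine h2.congr' ((eventually_gt_atTop 0).mono fun x hx => ?_)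
    have h3 : (0 : ℝ) < (x * s) ^ (-1 - α) := Real.rpow_pos_of_pos (mul_pos hx hs) _
    simp only [hF]
    rw [← hpow x s hx hs]
    field_simp

/-- The rescaled covariance kernel converges off the diagonal to the homogeneous limit kernel. -/
lemma tendsto_grainCov_scaled {d : ℕ} (hd : 1 ≤ d) {Ξ : Set (EuclideanSpace ℝ (Fin d))}
    (hΞmeas : MeasurableSet Ξ) (hΞbdd : Bornology.IsBounded Ξ)
    {α cf : ℝ} (hα₁ : 1 < α) (hcf : 0 < cf) {f : ℝ → ℝ} (hfmeas : Measurable f)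
    (hfnonneg : ∀ r, 0 ≤ f r)
    (hftail : Tendsto (fun r : ℝ => f r / (cf * r ^ (-1 - α))) atTop (𝓝 1))
    {t : EuclideanSpace ℝ (Fin d)} (ht : t ≠ 0) :
    Tendsto (fun lam : ℝ => lam ^ ((d : ℝ) * (α - 1)) * grainCov d Ξ f (lam • t)) atTop
      (𝓝 (angularFun d Ξ cf α (‖t‖⁻¹ • t) * ‖t‖ ^ (-(d : ℝ) * (α - 1)))) := by
  have ht0 : 0 < ‖t‖ := norm_pos_iff.2 ht
  have hz : ‖‖t‖⁻¹ • t‖ = 1 := by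
    rw [norm_smul, norm_inv, norm_norm, inv_mul_cancel₀ ht0.ne']
  have h1 : Tendsto (fun lam : ℝ => (lam * ‖t‖) ^ d) atTop atTop :=
    (tendsto_pow_atTop (by omega)).comp (tendsto_id.atTop_mul_const ht0)
  have h2 := ((tendsto_grainCov_ray hd hΞmeas hΞbdd hα₁ hcf hfmeas hfnonneg hftail hz).comp
    h1).mul_const (‖t‖ ^ (-(d : ℝ) * (α - 1)))
  refine h2.congr' ((eventually_gt_atTop 0).mono fun lam hlam => ?_)
  have hp : 0 < lam * ‖t‖ := mul_pos hlam ht0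
  have h3 : ((lam * ‖t‖) ^ d) ^ ((1 : ℝ) / d) = lam * ‖t‖ := by
    rw [one_div, Real.pow_rpow_inv_natCast hp.le (by omega)]
  have h4 : ((lam * ‖t‖) ^ d) ^ (α - 1) =
      lam ^ ((d : ℝ) * (α - 1)) * ‖t‖ ^ ((d : ℝ) * (α - 1)) := by
    rw [← Real.rpow_natCast, ← Real.rpow_mul hp.le, Real.mul_rpow hlam.le ht0.le]
  have h5 : ‖t‖ ^ ((d : ℝ) * (α - 1)) * ‖t‖ ^ (-(d : ℝ) * (α - 1)) = 1 := by
    rw [← Real.rpow_add ht0]; simp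
  simp only [Function.comp_apply, h3, h4, smul_smul]
  rw [mul_assoc lam, mul_inv_cancel₀ ht0.ne', mul_one]
  linear_combination (lam ^ ((d : ℝ) * (α - 1)) * grainCov d Ξ f (lam • t)) * h5

/-! ### The Riesz kernel on the product space -/

/-- Integrability of the Riesz kernel of order `β < d` against `|φ| ⊗ |φ|`. The kernel is at most
`1` away from the unit ball and integrable inside it, where one of the factors `φ` is bounded. -/
lemma integrable_riesz {d : ℕ} (hd : 1 ≤ d) {β : ℝ} (hβ0 : 0 ≤ β) (hβ : β < d)
    {φ : EuclideanSpace ℝ (Fin d) → ℝ} (hφmeas : Measurable φ)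
    (hφint : Integrable φ) (hφbdd : ∃ C : ℝ, ∀ t, |φ t| ≤ C) :
    Integrable (fun p : EuclideanSpace ℝ (Fin d) × EuclideanSpace ℝ (Fin d) =>
      |φ p.1| * |φ p.2| * ‖p.1 - p.2‖ ^ (-β)) := by
  obtain ⟨C, hC⟩ := hφbdd
  have : Nontrivial (EuclideanSpace ℝ (Fin d)) :=
    Module.nontrivial_of_finrank_pos (R := ℝ) (by rw [finrank_euclideanSpace_fin]; omega)
  have hball : IntegrableOn (fun t : EuclideanSpace ℝ (Fin d) => ‖t‖ ^ (-β))
      (Metric.ball 0 1) := by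
    rw [integrableOn_fun_norm_addHaar volume (f := fun y : ℝ => y ^ (-β)),
      finrank_euclideanSpace_fin]
    have h := (intervalIntegral.integrableOn_Ioo_rpow_iff (s := (d : ℝ) - 1 - β) one_pos).2
      (by linarith)
    refine h.congr_fun (fun y hy => ?_) measurableSet_Ioo
    have hy0 : 0 < y := hy.1
    simp only [smul_eq_mul]
    rw [← Real.rpow_natCast, ← Real.rpow_add hy0, Nat.cast_sub hd, Nat.cast_one, sub_eq_add_neg _ β]
  set k : EuclideanSpace ℝ (Fin d) → ℝ :=
    (Metric.ball 0 1).indicator fun t => ‖t‖ ^ (-β) with hk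
  have hkint : Integrable k := hball.integrable_indicator measurableSet_ball
  have h1 : Integrable (fun p : EuclideanSpace ℝ (Fin d) × EuclideanSpace ℝ (Fin d) =>
      |φ p.1| * |φ p.2|) := hφint.abs.mul_prod hφint.abs
  have h2 : Integrable (fun p : EuclideanSpace ℝ (Fin d) × EuclideanSpace ℝ (Fin d) =>
      |φ p.2| * k (p.1 - p.2)) :=
    hφint.abs.convolution_integrand (ContinuousLinearMap.mul ℝ ℝ) hkint
  refine (h1.add (h2.const_mul C)).mono' ?_ (Eventually.of_forall fun p => ?_)
  · exact (((hφmeas.comp measurable_fst).abs.mul (hφmeas.comp measurable_snd).abs).mul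
      ((measurable_fst.sub measurable_snd).norm.pow_const _)).aestronglyMeasurable
  · have ha := abs_nonneg (φ p.1)
    have hb := abs_nonneg (φ p.2)
    have hn : 0 ≤ ‖p.1 - p.2‖ ^ (-β) := Real.rpow_nonneg (norm_nonneg _) _
    rw [Real.norm_of_nonneg (mul_nonneg (mul_nonneg ha hb) hn)]
    simp only [Pi.add_apply]
    by_cases hp : p.1 - p.2 ∈ Metric.ball (0 : EuclideanSpace ℝ (Fin d)) 1
    · rw [hk, Set.indicator_of_mem hp]
      have := mul_le_mul_of_nonneg_right (hC p.1) (mul_nonneg hb hn)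
      nlinarith [mul_nonneg ha hb]
    · rw [hk, Set.indicator_of_notMem hp]
      rw [mem_ball_zero_iff, not_lt] at hp
      have h3 : ‖p.1 - p.2‖ ^ (-β) ≤ 1 := Real.rpow_le_one_of_one_le_of_nonpos hp (by linarith)
      have := mul_le_mul_of_nonneg_left h3 (mul_nonneg ha hb)
      linarith

lemma ae_sub_ne_zero {d : ℕ} (hd : 1 ≤ d) :
    ∀ᵐ p : EuclideanSpace ℝ (Fin d) × EuclideanSpace ℝ (Fin d), p.1 - p.2 ≠ 0 := by
  have : Nontrivial (EuclideanSpace ℝ (Fin d)) :=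
    Module.nontrivial_of_finrank_pos (R := ℝ) (by rw [finrank_euclideanSpace_fin]; omega)
  have hs : MeasurableSet {p : EuclideanSpace ℝ (Fin d) × EuclideanSpace ℝ (Fin d) |
      p.1 - p.2 = 0} := (measurable_fst.sub measurable_snd) (measurableSet_singleton 0)
  rw [ae_iff]
  simp only [ne_eq, not_not]
  rw [Measure.volume_eq_prod, Measure.measure_prod_null hs]
  refine Eventually.of_forall fun x => ?_
  have : (Prod.mk x ⁻¹' {p : EuclideanSpace ℝ (Fin d) × EuclideanSpace ℝ (Fin d) |
      p.1 - p.2 = 0}) = {x} := by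
    ext y; simp [sub_eq_zero, eq_comm]
  simp [this]

/-! ### Convergence of the bilinear form -/

/-- asymptotics of the rescaled covariance bilinear form `c_λ(φ)`. -/
theorem grain_bilinear_form_asymptotics (d : ℕ) (hd : 1 ≤ d)
    (Ξ : Set (EuclideanSpace ℝ (Fin d))) (hΞmeas : MeasurableSet Ξ)
    (hΞbdd : Bornology.IsBounded Ξ)
    (α cf : ℝ) (hα₁ : 1 < α) (hα₂ : α < 2) (hcf : 0 < cf)
    (f : ℝ → ℝ) (hfmeas : Measurable f) (hfnonneg : ∀ r, 0 ≤ f r)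
    (hftail : Tendsto (fun r : ℝ => f r / (cf * r ^ (-1 - α))) atTop (𝓝 1))
    (hcont : ContinuousOn
      (fun p : ℝ × EuclideanSpace ℝ (Fin d) =>
        (volume (Ξ ∩ ((· + (p.1 ^ (-(1 : ℝ) / d)) • p.2) ⁻¹' Ξ))).toReal)
      (Set.Ioi (0 : ℝ) ×ˢ Metric.sphere (0 : EuclideanSpace ℝ (Fin d)) 1))
    (hfint : IntegrableOn (fun r => r * f r) (Set.Ioi (0 : ℝ)))
    (φ : EuclideanSpace ℝ (Fin d) → ℝ) (hφmeas : Measurable φ)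
    (hφint : Integrable φ) (hφbdd : ∃ C : ℝ, ∀ t, |φ t| ≤ C) :
    Integrable (fun p : EuclideanSpace ℝ (Fin d) × EuclideanSpace ℝ (Fin d) =>
      φ p.1 * φ p.2 * angularFun d Ξ cf α (‖p.1 - p.2‖⁻¹ • (p.1 - p.2))
        * ‖p.1 - p.2‖ ^ (-(d : ℝ) * (α - 1))) ∧
    Tendsto (fun lam : ℝ => lam ^ (-(d : ℝ) * (3 - α))
        * ∫ p : EuclideanSpace ℝ (Fin d) × EuclideanSpace ℝ (Fin d),
            φ (lam⁻¹ • p.1) * φ (lam⁻¹ • p.2) * grainCov d Ξ f (p.1 - p.2))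
      atTop
      (𝓝 (∫ p : EuclideanSpace ℝ (Fin d) × EuclideanSpace ℝ (Fin d),
        φ p.1 * φ p.2 * angularFun d Ξ cf α (‖p.1 - p.2‖⁻¹ • (p.1 - p.2))
          * ‖p.1 - p.2‖ ^ (-(d : ℝ) * (α - 1)))) := by
  obtain ⟨C, hC0, hC⟩ := exists_grainCov_le hd hΞbdd hα₁ hcf hfnonneg hftail hfint
  set K : EuclideanSpace ℝ (Fin d) × EuclideanSpace ℝ (Fin d) → ℝ := fun p =>
    φ p.1 * φ p.2 * angularFun d Ξ cf α (‖p.1 - p.2‖⁻¹ • (p.1 - p.2))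
        * ‖p.1 - p.2‖ ^ (-(d : ℝ) * (α - 1)) with hK
  set G : ℝ → EuclideanSpace ℝ (Fin d) × EuclideanSpace ℝ (Fin d) → ℝ := fun lam p =>
    φ p.1 * φ p.2 * (lam ^ ((d : ℝ) * (α - 1)) * grainCov d Ξ f (lam • (p.1 - p.2))) with hG
  set B : EuclideanSpace ℝ (Fin d) × EuclideanSpace ℝ (Fin d) → ℝ := fun p =>
    C * (|φ p.1| * |φ p.2| * ‖p.1 - p.2‖ ^ (-((d : ℝ) * (α - 1)))) with hB
  have hd0 : (0 : ℝ) < d := by exact_mod_cast hd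
  have hBint : Integrable B :=
    (integrable_riesz hd (mul_nonneg hd0.le (by linarith)) (by nlinarith) hφmeas hφint
      hφbdd).const_mul C
  have hGmeas : ∀ lam, AEStronglyMeasurable (G lam) := fun lam =>
    (((hφmeas.comp measurable_fst).mul (hφmeas.comp measurable_snd)).mul
      (((measurable_grainCov hd hΞmeas hfmeas).comp
        ((measurable_fst.sub measurable_snd).const_smul lam)).const_mul _)).aestronglyMeasurable
  have hGB : ∀ lam : ℝ, 0 < lam → ∀ p, p.1 - p.2 ≠ 0 → ‖G lam p‖ ≤ B p := by
    intro lam hlam p hp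
    have h1 := hC (lam • (p.1 - p.2)) (smul_ne_zero hlam.ne' hp)
    rw [norm_smul, Real.norm_of_nonneg hlam.le, Real.mul_rpow hlam.le (norm_nonneg _)] at h1
    have h2 : lam ^ ((d : ℝ) * (α - 1)) * lam ^ (-(d : ℝ) * (α - 1)) = 1 := by
      rw [← Real.rpow_add hlam]; simp
    have h3 : 0 ≤ lam ^ ((d : ℝ) * (α - 1)) := Real.rpow_nonneg hlam.le _
    have h4 : lam ^ ((d : ℝ) * (α - 1)) * |grainCov d Ξ f (lam • (p.1 - p.2))| ≤
        C * ‖p.1 - p.2‖ ^ (-(d : ℝ) * (α - 1)) := by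
      refine (mul_le_mul_of_nonneg_left h1 h3).trans_eq ?_
      linear_combination (C * ‖p.1 - p.2‖ ^ (-(d : ℝ) * (α - 1))) * h2
    simp only [hG, hB, norm_mul, Real.norm_eq_abs, abs_of_nonneg h3]
    rw [← neg_mul]
    refine (mul_le_mul_of_nonneg_left h4
      (mul_nonneg (abs_nonneg (φ p.1)) (abs_nonneg (φ p.2)))).trans_eq ?_
    ring
  have hlim : ∀ p : EuclideanSpace ℝ (Fin d) × EuclideanSpace ℝ (Fin d), p.1 - p.2 ≠ 0 →
      Tendsto (fun lam => G lam p) atTop (𝓝 (K p)) := by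
    intro p hp
    have := (tendsto_grainCov_scaled hd hΞmeas hΞbdd hα₁ hcf hfmeas hfnonneg hftail
      hp).const_mul (φ p.1 * φ p.2)
    simpa only [hG, hK, mul_assoc] using this
  have hae := ae_sub_ne_zero hd
  have hKint : Integrable K := by
    refine hBint.mono' (aestronglyMeasurable_of_tendsto_ae atTop hGmeas
      (hae.mono fun p hp => hlim p hp)) (hae.mono fun p hp => ?_)
    exact le_of_tendsto (hlim p hp).norm
      ((eventually_gt_atTop 0).mono fun lam hlam => hGB lam hlam p hp)
  refine ⟨hKint, ?_⟩
  have hmain : Tendsto (fun lam => ∫ p, G lam p) atTop (𝓝 (∫ p, K p)) :=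
    tendsto_integral_filter_of_dominated_convergence B (Eventually.of_forall hGmeas)
      ((eventually_gt_atTop 0).mono fun lam hlam => hae.mono fun p hp => hGB lam hlam p hp)
      hBint (hae.mono fun p hp => hlim p hp)
  refine hmain.congr' ((eventually_gt_atTop 0).mono fun lam hlam => ?_)
  -- the substitution `p = lam • q` on the `2d`-dimensional product space
  have hsub := Measure.integral_comp_inv_smul
    ((volume : Measure (EuclideanSpace ℝ (Fin d))).prod
      (volume : Measure (EuclideanSpace ℝ (Fin d))))
    (fun p => φ p.1 * φ p.2 * grainCov d Ξ f (lam • (p.1 - p.2))) lam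
  have hcancel : ∀ p : EuclideanSpace ℝ (Fin d) × EuclideanSpace ℝ (Fin d),
      lam • ((lam⁻¹ • p).1 - (lam⁻¹ • p).2) = p.1 - p.2 := fun p => by
    rw [Prod.smul_fst, Prod.smul_snd, ← smul_sub, smul_inv_smul₀ hlam.ne']
  rw [← Measure.volume_eq_prod] at hsub
  simp only [hcancel] at hsub
  simp only [Prod.smul_fst, Prod.smul_snd] at hsub
  beta_reduce
  rw [hsub, Module.finrank_prod, finrank_euclideanSpace_fin, abs_of_pos (pow_pos hlam _),
    smul_eq_mul, ← mul_assoc, ← integral_const_mul]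
  have hpow : lam ^ (-(d : ℝ) * (3 - α)) * lam ^ (d + d) = lam ^ ((d : ℝ) * (α - 1)) := by
    rw [← Real.rpow_natCast, ← Real.rpow_add hlam]
    congr 1
    push_cast
    ring
  rw [hpow]
  refine integral_congr_ae (Eventually.of_forall fun p => ?_)
  simp only [hG]
  ring
end

section
/- Under Assumption LRD and assuming ∫_0^∞ r f(r) dr < ∞, for every φ ∈ L¹(ℝ^d) ∩ L^∞(ℝ^d) there exists C > 0 such that for all λ ≥ 2 the quantity I(λ) = ∫_{ℝ^d} ∫_{ℝ^d} |φ(t₁/λ) φ(t₂/λ)| min(1, r_X(t₁ − t₂)²) dt₁ dt₂ satisfies: I(λ) ≤ C λ^d if α > 3/2; I(λ) ≤ C λ^{2d(2−α)} if α < 3/2; and I(λ) ≤ C λ^d log λ if α = 3/2. -/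
/-!
The grains are contained in balls: if `Ξ ⊆ closedBall 0 R`, then `r^{1/d} Ξ` meets its translate by
`t` only when `‖t‖ ≤ 2 R r^{1/d}`, i.e. `r ≥ (‖t‖ / 2R)^d`. Since the overlap has volume at most
`r * vol Ξ` and `f r ≲ r^{-1-α}` at infinity, this gives `r_X(t) ≲ ‖t‖^{-d(α-1)}` for large `t`
(`grainCov_le`), hence `min(1, r_X(t)²) ≤ K (1 + ‖t‖)^{-β}` with `β = 2d(α-1)`
(`exists_min_sq_le`).

In the double integral the pairs with `‖t₁ - t₂‖ ≤ lam` are treated with the sup bound on one factor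
`φ` and the remaining ones with `(1 + ‖t₁ - t₂‖)^{-β} ≤ lam^{-β}` (`form_le`). In polar coordinates
both contributions are controlled by `lam^d * (∫₀^lam (1 + y)^{d-1-β} dy + lam^{d-β})`, and the
three regimes are `β > d`, `β < d` and `β = d`.

Every integral comparison dominates a nonnegative integrand by an integrable one; if the smaller
integrand is not integrable its Bochner integral is `0` and the inequality persists, so the
measurability of the covariance never has to be established.
-/

open scoped BigOperators Pointwise
open MeasureTheory Filter Topology

/-! ### Decay of the covariance -/

lemma overlap_toReal_le {d : ℕ} (hd : 1 ≤ d) {Ξ : Set (EuclideanSpace ℝ (Fin d))}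
    (hΞ : Bornology.IsBounded Ξ) {r : ℝ} (hr : 0 < r) (t : EuclideanSpace ℝ (Fin d)) :
    (volume ((r ^ ((1 : ℝ) / d)) • Ξ ∩ ((· + t) ⁻¹' ((r ^ ((1 : ℝ) / d)) • Ξ)))).toReal
      ≤ r * (volume Ξ).toReal := by
  have hd0 : (d : ℝ) ≠ 0 := by positivity
  have hpow : (r ^ ((1 : ℝ) / d)) ^ d = r := by
    rw [one_div]; exact Real.rpow_inv_natCast_pow hr.le (by omega)
  have hv : volume ((r ^ ((1 : ℝ) / d)) • Ξ) = ENNReal.ofReal r * volume Ξ := by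
    rw [Measure.addHaar_smul]
    simp only [finrank_euclideanSpace, Fintype.card_fin]
    rw [hpow, abs_of_pos hr]
  have hfin : ENNReal.ofReal r * volume Ξ ≠ ⊤ :=
    ENNReal.mul_ne_top ENNReal.ofReal_ne_top hΞ.measure_lt_top.ne
  calc _ ≤ (ENNReal.ofReal r * volume Ξ).toReal :=
        ENNReal.toReal_mono hfin (hv ▸ measure_mono Set.inter_subset_left)
    _ = _ := by rw [ENNReal.toReal_mul, ENNReal.toReal_ofReal hr.le]

lemma overlap_eq_empty {d : ℕ} (hd : 1 ≤ d) {Ξ : Set (EuclideanSpace ℝ (Fin d))} {R : ℝ}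
    (hR : 0 < R) (hΞ : Ξ ⊆ Metric.closedBall 0 R) {r : ℝ} (hr : 0 < r)
    {t : EuclideanSpace ℝ (Fin d)} (hrt : r < (‖t‖ / (2 * R)) ^ (d : ℝ)) :
    (r ^ ((1 : ℝ) / d)) • Ξ ∩ ((· + t) ⁻¹' ((r ^ ((1 : ℝ) / d)) • Ξ)) = ∅ := by
  rw [Set.eq_empty_iff_forall_notMem]
  rintro x ⟨⟨a, ha, hax⟩, ⟨b, hb, hbx⟩⟩
  have ha' : ‖a‖ ≤ R := by simpa using hΞ ha
  have hb' : ‖b‖ ≤ R := by simpa using hΞ hb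
  simp only at hax hbx
  set c := r ^ ((1 : ℝ) / d) with hc
  have hc0 : 0 < c := Real.rpow_pos_of_pos hr _
  have ht : t = c • b - c • a := by rw [hax, hbx]; abel
  have hn : ‖t‖ ≤ c * (2 * R) := by
    calc ‖t‖ ≤ ‖c • b‖ + ‖c • a‖ := ht ▸ norm_sub_le _ _
      _ = c * (‖b‖ + ‖a‖) := by rw [norm_smul, norm_smul, Real.norm_of_nonneg hc0.le]; ring
      _ ≤ c * (2 * R) := by gcongr; linarith
  have h1 : ‖t‖ / (2 * R) ≤ c := by rwa [div_le_iff₀ (by positivity)]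
  have h2 : (‖t‖ / (2 * R)) ^ (d : ℝ) ≤ c ^ (d : ℝ) :=
    Real.rpow_le_rpow (by positivity) h1 (by positivity)
  have h3 : c ^ (d : ℝ) = r := by
    have : (d : ℝ) ≠ 0 := by positivity
    rw [hc, ← Real.rpow_mul hr.le, one_div_mul_cancel this, Real.rpow_one]
  linarith

lemma grainCov_nonneg {d : ℕ} {Ξ : Set (EuclideanSpace ℝ (Fin d))} {f : ℝ → ℝ}
    (hf : ∀ r, 0 ≤ f r) (t : EuclideanSpace ℝ (Fin d)) : 0 ≤ grainCov d Ξ f t :=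
  integral_nonneg fun r => mul_nonneg ENNReal.toReal_nonneg (hf r)

/-- Only the tail `r ≥ (‖t‖ / 2R)^d` contributes to the covariance at `t`. -/
lemma grainCov_le {d : ℕ} (hd : 1 ≤ d) {Ξ : Set (EuclideanSpace ℝ (Fin d))} {R : ℝ}
    (hR : 0 < R) (hΞ : Ξ ⊆ Metric.closedBall 0 R) {f : ℝ → ℝ} (hf : ∀ r, 0 ≤ f r)
    {α b r₀ : ℝ} (hα : 1 < α) (hfb : ∀ r, r₀ ≤ r → 0 < r → f r ≤ b * r ^ (-1 - α))
    {t : EuclideanSpace ℝ (Fin d)} (ht : 0 < ‖t‖) (hr₀ : r₀ ≤ (‖t‖ / (2 * R)) ^ (d : ℝ)) :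
    grainCov d Ξ f t ≤
      (volume Ξ).toReal * b * (((‖t‖ / (2 * R)) ^ (d : ℝ)) ^ (1 - α) / (α - 1)) := by
  set u := (‖t‖ / (2 * R)) ^ (d : ℝ) with hu
  have hu0 : 0 < u := Real.rpow_pos_of_pos (by positivity) _
  set V := (volume Ξ).toReal with hV
  have hV0 : 0 ≤ V := ENNReal.toReal_nonneg
  have hint : IntegrableOn (fun r : ℝ => V * b * r ^ (-α)) (Set.Ici u) :=
    ((integrableOn_Ici_iff_integrableOn_Ioi (by simp)).2
      (integrableOn_Ioi_rpow_of_lt (by linarith) hu0)).const_mul _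
  have hsub : Set.Ici u ⊆ Set.Ioi (0 : ℝ) := fun r hr => lt_of_lt_of_le hu0 hr
  calc grainCov d Ξ f t
      ≤ ∫ r in Set.Ioi (0 : ℝ), (Set.Ici u).indicator (fun r : ℝ => V * b * r ^ (-α)) r := by
        refine integral_mono_of_nonneg
          (ae_of_all _ fun r => mul_nonneg ENNReal.toReal_nonneg (hf r)) ?_ ?_
        · exact ((integrable_indicator_iff measurableSet_Ici).2 hint).integrableOn
        · refine (ae_restrict_iff' measurableSet_Ioi).2 (ae_of_all _ fun r hr => ?_)
          have hr' : 0 < r := hr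
          by_cases hur : u ≤ r
          · rw [Set.indicator_of_mem (show r ∈ Set.Ici u from hur)]
            calc _ ≤ (r * V) * (b * r ^ (-1 - α)) :=
                  mul_le_mul (overlap_toReal_le hd (Metric.isBounded_closedBall.subset hΞ) hr' t)
                    (hfb r (hr₀.trans hur) hr') (hf r) (by positivity)
              _ = V * b * (r ^ (1 : ℝ) * r ^ (-1 - α)) := by rw [Real.rpow_one]; ring
              _ = V * b * r ^ (-α) := by rw [← Real.rpow_add hr']; congr 2; ring
          · rw [Set.indicator_of_notMem (show r ∉ Set.Ici u from hur)]
            simp only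
            rw [overlap_eq_empty hd hR hΞ hr' (not_le.1 hur)]
            simp
    _ = V * b * (u ^ (1 - α) / (α - 1)) := by
        rw [setIntegral_indicator measurableSet_Ici, Set.inter_eq_self_of_subset_right hsub,
          integral_Ici_eq_integral_Ioi, integral_const_mul, integral_Ioi_rpow_of_lt (by linarith) hu0]
        congr 1
        rw [show -α + 1 = 1 - α by ring, neg_div, ← div_neg, neg_sub]

/-- The decay of the truncated squared covariance, valid for all `t`. -/
lemma exists_min_sq_le {d : ℕ} (hd : 1 ≤ d) {Ξ : Set (EuclideanSpace ℝ (Fin d))}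
    (hΞ : Bornology.IsBounded Ξ) {f : ℝ → ℝ} (hf : ∀ r, 0 ≤ f r)
    {α cf : ℝ} (hα : 1 < α) (hcf : 0 < cf)
    (hftail : Tendsto (fun r : ℝ => f r / (cf * r ^ (-1 - α))) atTop (𝓝 1)) :
    ∃ K : ℝ, 0 < K ∧ ∀ t : EuclideanSpace ℝ (Fin d),
      min 1 ((grainCov d Ξ f t) ^ 2) ≤ K * (1 + ‖t‖) ^ (-(2 * (d : ℝ) * (α - 1))) := by
  obtain ⟨R, hR, hΞR⟩ := hΞ.subset_closedBall_lt 0 0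
  obtain ⟨r₀, hr₀⟩ := eventually_atTop.1 (hftail.eventually (gt_mem_nhds (one_lt_two (α := ℝ))))
  have hd0 : (0 : ℝ) < d := by positivity
  -- Beyond `r₀` the ratio of `f` to its asymptotic equivalent is below `2`.
  have hfb : ∀ r, r₀ ≤ r → 0 < r → f r ≤ (2 * cf) * r ^ (-1 - α) := fun r h1 h2 => by
    have hp : 0 < cf * r ^ (-1 - α) := mul_pos hcf (Real.rpow_pos_of_pos h2 _)
    have := (div_lt_iff₀ hp).1 (hr₀ r h1)
    linarith
  have hlarge : Tendsto (fun x : ℝ => (x / (2 * R)) ^ (d : ℝ)) atTop atTop :=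
    (tendsto_rpow_atTop hd0).comp (tendsto_id.atTop_div_const (by positivity))
  obtain ⟨T, hT⟩ := eventually_atTop.1
    ((hlarge.eventually_ge_atTop r₀).and (eventually_ge_atTop (1 : ℝ)))
  set β := 2 * (d : ℝ) * (α - 1) with hβ
  have hβ0 : 0 < β := by have : 0 < α - 1 := by linarith
                         positivity
  set A := (volume Ξ).toReal * (2 * cf) * ((2 * R) ^ (β / 2) / (α - 1)) with hA
  -- The first summand serves `‖t‖ ≥ T`, where `‖t‖ ≥ 1` turns `‖t‖^{-β}` into `(1 + ‖t‖)^{-β}` at the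
  -- cost of `2^β`; the second serves `‖t‖ < T`, where the truncation at `1` is used.
  refine ⟨A ^ 2 * 2 ^ β + (1 + |T|) ^ β, by positivity, fun t => ?_⟩
  have hp : 0 < (1 + ‖t‖) ^ (-β) := Real.rpow_pos_of_pos (by positivity) _
  rw [add_mul]
  by_cases hTt : T ≤ ‖t‖
  · obtain ⟨h1, h2⟩ := hT _ hTt
    have ht0 : 0 < ‖t‖ := by linarith
    have hcov := grainCov_le hd hR hΞR hf hα hfb ht0 h1
    have heq : ((‖t‖ / (2 * R)) ^ (d : ℝ)) ^ (1 - α) = ‖t‖ ^ (-(β / 2)) * (2 * R) ^ (β / 2) := by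
      rw [← Real.rpow_mul (by positivity), show (d : ℝ) * (1 - α) = -(β / 2) by rw [hβ]; ring,
        Real.div_rpow ht0.le (by positivity), Real.rpow_neg (by positivity : 0 ≤ 2 * R), div_inv_eq_mul]
    have hcov' : grainCov d Ξ f t ≤ A * ‖t‖ ^ (-(β / 2)) := by
      refine hcov.trans_eq ?_
      rw [heq, hA]; ring
    have hsq : (‖t‖ ^ (-(β / 2))) ^ 2 = ‖t‖ ^ (-β) := by
      rw [← Real.rpow_natCast, ← Real.rpow_mul ht0.le]; congr 1; push_cast; ring
    have hcmp : ‖t‖ ^ (-β) ≤ 2 ^ β * (1 + ‖t‖) ^ (-β) := by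
      calc ‖t‖ ^ (-β) ≤ ((1 + ‖t‖) / 2) ^ (-β) :=
            Real.rpow_le_rpow_of_nonpos (by positivity) (by linarith) (by linarith)
        _ = _ := by
            rw [Real.div_rpow (by positivity) (by positivity), Real.rpow_neg (by norm_num : (0 : ℝ) ≤ 2),
              div_inv_eq_mul, mul_comm]
    calc min 1 ((grainCov d Ξ f t) ^ 2) ≤ (grainCov d Ξ f t) ^ 2 := min_le_right _ _
      _ ≤ (A * ‖t‖ ^ (-(β / 2))) ^ 2 := pow_le_pow_left₀ (grainCov_nonneg hf t) hcov' 2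
      _ = A ^ 2 * ‖t‖ ^ (-β) := by rw [mul_pow, hsq]
      _ ≤ A ^ 2 * (2 ^ β * (1 + ‖t‖) ^ (-β)) := by gcongr
      _ ≤ _ := by
        rw [← mul_assoc]
        exact le_add_of_nonneg_right (by positivity)
  · have h1 : ‖t‖ ≤ |T| := (not_le.1 hTt).le.trans (le_abs_self T)
    calc min 1 ((grainCov d Ξ f t) ^ 2) ≤ 1 := min_le_left _ _
      _ = (1 + ‖t‖) ^ β * (1 + ‖t‖) ^ (-β) := by
        rw [← Real.rpow_add (by positivity), add_neg_cancel, Real.rpow_zero]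
      _ ≤ (1 + |T|) ^ β * (1 + ‖t‖) ^ (-β) := by gcongr
      _ ≤ _ := le_add_of_nonneg_left (by positivity)

/-! ### The kernel `(1 + ‖t‖)^{-β}` and the bilinear form -/

/-- The profile `(1 + ‖t‖)^{-β}` cut off at radius `lam`. -/
noncomputable def cutProfile (β lam y : ℝ) : ℝ :=
  (Set.Iic lam).indicator (fun y => (1 + y) ^ (-β)) y

lemma integrable_cutProfile {d : ℕ} {β lam : ℝ} :
    Integrable (fun t : EuclideanSpace ℝ (Fin d) => cutProfile β lam ‖t‖) := by
  have hc : Continuous fun t : EuclideanSpace ℝ (Fin d) => (1 + ‖t‖) ^ (-β) :=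
    (continuous_const.add continuous_norm).rpow_const fun t =>
      Or.inl (by positivity : (1 + ‖t‖) ≠ 0)
  have h := (integrable_indicator_iff (μ := volume) Metric.isClosed_closedBall.measurableSet).2
    (hc.continuousOn.integrableOn_compact (isCompact_closedBall (0 : EuclideanSpace ℝ (Fin d)) lam))
  refine h.congr (ae_of_all _ fun t => ?_)
  simp [cutProfile, Set.indicator]

/-- Polar coordinates, together with `y^{d-1} ≤ (1 + y)^{d-1}`. -/
lemma integral_cutProfile_le {d : ℕ} (hd : 1 ≤ d) {β lam : ℝ} (hlam : 0 < lam) :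
    ∫ t : EuclideanSpace ℝ (Fin d), cutProfile β lam ‖t‖ ≤
      d * (volume : Measure (EuclideanSpace ℝ (Fin d))).real (Metric.ball 0 1) *
        ∫ u in (1 : ℝ)..(1 + lam), u ^ ((d : ℝ) - 1 - β) := by
  have : Nonempty (Fin d) := ⟨⟨0, hd⟩⟩
  rw [integral_fun_norm_addHaar volume (cutProfile β lam)]
  simp only [finrank_euclideanSpace, Fintype.card_fin, nsmul_eq_mul, smul_eq_mul]
  rw [← mul_assoc]
  refine mul_le_mul_of_nonneg_left ?_ (by positivity)
  have hshift : ∫ u in (1 : ℝ)..(1 + lam), u ^ ((d : ℝ) - 1 - β)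
      = ∫ y in Set.Ioc (0 : ℝ) lam, (1 + y) ^ ((d : ℝ) - 1 - β) := by
    rw [← intervalIntegral.integral_of_le hlam.le,
      intervalIntegral.integral_comp_add_left (fun u : ℝ => u ^ ((d : ℝ) - 1 - β)) 1, add_zero]
  have hint : IntegrableOn (fun y : ℝ => (1 + y) ^ ((d : ℝ) - 1 - β)) (Set.Ioc 0 lam) := by
    refine (ContinuousOn.integrableOn_compact isCompact_Icc ?_).mono_set Set.Ioc_subset_Icc_self
    refine (continuousOn_const.add continuousOn_id).rpow_const fun y hy => Or.inl ?_
    have : (0 : ℝ) ≤ y := hy.1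
    exact (by positivity : (1 + y) ≠ 0)
  rw [hshift, ← Set.Ioi_inter_Iic, ← setIntegral_indicator measurableSet_Iic]
  refine integral_mono_of_nonneg ?_ ?_ ?_
  · refine (ae_restrict_iff' measurableSet_Ioi).2 (ae_of_all _ fun y hy => ?_)
    have hy' : (0 : ℝ) < y := hy
    exact mul_nonneg (by positivity) (Set.indicator_apply_nonneg fun _ => by positivity)
  · rw [integrable_indicator_iff measurableSet_Iic, IntegrableOn,
      Measure.restrict_restrict measurableSet_Iic, Set.inter_comm, Set.Ioi_inter_Iic]
    exact hint
  · refine (ae_restrict_iff' measurableSet_Ioi).2 (ae_of_all _ fun y hy => ?_)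
    have hy' : (0 : ℝ) < y := hy
    simp only [cutProfile, Set.indicator]
    split_ifs with h
    · have h1 : (0 : ℝ) < 1 + y := by positivity
      have h2 : (1 + y) ^ ((d : ℝ) - 1 - β) = (1 + y) ^ (d - 1) * (1 + y) ^ (-β) := by
        rw [← Real.rpow_natCast, ← Real.rpow_add h1, Nat.cast_sub hd]
        congr 1; push_cast; ring
      rw [h2]
      gcongr
      linarith
    · simp

/-- The bilinear form split at `‖t₁ - t₂‖ = lam`: near the diagonal one factor `φ` is bounded by `M`,
away from it the kernel is at most `lam^{-β}`. -/
lemma form_le {d : ℕ} (hd : 1 ≤ d) {φ : EuclideanSpace ℝ (Fin d) → ℝ} (hφint : Integrable φ)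
    {M : ℝ} (hM : ∀ t, |φ t| ≤ M) {g : EuclideanSpace ℝ (Fin d) → ℝ} (hg0 : ∀ t, 0 ≤ g t)
    {K β : ℝ} (hK : 0 ≤ K) (hβ : 0 ≤ β) (hg : ∀ t, g t ≤ K * (1 + ‖t‖) ^ (-β))
    {lam : ℝ} (hlam : 0 < lam) :
    (∫ p : EuclideanSpace ℝ (Fin d) × EuclideanSpace ℝ (Fin d),
      |φ (lam⁻¹ • p.1) * φ (lam⁻¹ • p.2)| * g (p.1 - p.2)) ≤
      K * (lam ^ (d : ℝ) * ∫ t, |φ t|) *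
        (M * (d * (volume : Measure (EuclideanSpace ℝ (Fin d))).real (Metric.ball 0 1) *
          ∫ u in (1 : ℝ)..(1 + lam), u ^ ((d : ℝ) - 1 - β)) +
        lam ^ ((d : ℝ) - β) * ∫ t, |φ t|) := by
  have hM0 : 0 ≤ M := (abs_nonneg _).trans (hM 0)
  set ψ : EuclideanSpace ℝ (Fin d) → ℝ := fun t => |φ (lam⁻¹ • t)| with hψ
  set A := ∫ t, |φ t| with hA
  have hψint : Integrable ψ := (hφint.comp_smul (inv_ne_zero hlam.ne')).abs
  have hψA : ∫ t, ψ t = lam ^ (d : ℝ) * A := by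
    have := Measure.integral_comp_inv_smul_of_nonneg (volume : Measure (EuclideanSpace ℝ (Fin d)))
      (fun t => |φ t|) hlam.le
    simpa [hψ, finrank_euclideanSpace] using this
  set h : EuclideanSpace ℝ (Fin d) → ℝ := fun t => (1 + ‖t‖) ^ (-β) with hh
  have hh0 : ∀ t, 0 ≤ h t := fun t => by simp only [hh]; positivity
  have hh1 : ∀ t, h t ≤ 1 := fun t =>
    Real.rpow_le_one_of_one_le_of_nonpos (by linarith [norm_nonneg t]) (by linarith)
  have hhc : Continuous h := (continuous_const.add continuous_norm).rpow_const fun t =>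
      Or.inl (by positivity : (1 + ‖t‖) ≠ 0)
  -- The dominating kernel on the product space.
  have hFint : Integrable (fun p : EuclideanSpace ℝ (Fin d) × EuclideanSpace ℝ (Fin d) =>
      h (p.1 - p.2) * (ψ p.1 * ψ p.2)) (volume.prod volume) := by
    refine (hψint.mul_prod hψint).bdd_mul (c := 1)
      (hhc.comp (continuous_fst.sub continuous_snd)).aestronglyMeasurable (ae_of_all _ fun p => ?_)
    rw [Real.norm_of_nonneg (hh0 _)]
    exact hh1 _
  have hinner : ∀ s, ∫ t, h (t - s) * (ψ t * ψ s) ≤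
      ψ s * (M * (∫ t : EuclideanSpace ℝ (Fin d), cutProfile β lam ‖t‖)
        + lam ^ (-β) * (lam ^ (d : ℝ) * A)) := by
    intro s
    have e1 : ∫ t, h (t - s) * (ψ t * ψ s) = ψ s * ∫ t, h (t - s) * ψ t := by
      rw [← integral_const_mul]; congr 1; ext t; ring
    rw [e1]
    refine mul_le_mul_of_nonneg_left ?_ (abs_nonneg _)
    have hk := integrable_cutProfile (d := d) (β := β) (lam := lam)
    calc ∫ t, h (t - s) * ψ t
        ≤ ∫ t, (M * cutProfile β lam ‖t - s‖ + lam ^ (-β) * ψ t) := by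
          refine integral_mono_of_nonneg
            (ae_of_all _ fun t => mul_nonneg (hh0 _) (abs_nonneg _))
            (((hk.comp_sub_right s).const_mul M).add (hψint.const_mul _))
            (ae_of_all _ fun t => ?_)
          simp only [cutProfile, Set.indicator, Set.mem_Iic]
          split_ifs with hc
          · have h1 : h (t - s) * ψ t ≤ h (t - s) * M := mul_le_mul_of_nonneg_left (hM _) (hh0 _)
            have h2 : 0 ≤ lam ^ (-β) * ψ t := mul_nonneg (by positivity) (abs_nonneg _)
            have h3 : h (t - s) = (1 + ‖t - s‖) ^ (-β) := rfl
            rw [← h3]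
            linarith
          · rw [mul_zero, zero_add]
            refine mul_le_mul_of_nonneg_right ?_ (abs_nonneg _)
            exact Real.rpow_le_rpow_of_nonpos hlam (by linarith) (by linarith)
      _ = _ := by
          rw [integral_add ((hk.comp_sub_right s).const_mul M) (hψint.const_mul _),
            integral_const_mul, integral_const_mul, hψA,
            integral_sub_right_eq_self (fun t => cutProfile β lam ‖t‖) s]
  calc _ ≤ ∫ p : EuclideanSpace ℝ (Fin d) × EuclideanSpace ℝ (Fin d),
          K * (h (p.1 - p.2) * (ψ p.1 * ψ p.2)) := by
        refine integral_mono_of_nonneg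
          (ae_of_all _ fun p => mul_nonneg (abs_nonneg _) (hg0 _))
          (hFint.const_mul K) (ae_of_all _ fun p => ?_)
        simp only [hψ, abs_mul]
        have := mul_le_mul_of_nonneg_left (hg (p.1 - p.2))
          (mul_nonneg (abs_nonneg (φ (lam⁻¹ • p.1))) (abs_nonneg (φ (lam⁻¹ • p.2))))
        refine this.trans_eq ?_
        simp only [hh]; ring
    _ = K * ∫ s, ∫ t, h (t - s) * (ψ t * ψ s) := by
        rw [integral_const_mul, Measure.volume_eq_prod, integral_prod_symm _ hFint]
    _ ≤ K * ∫ s, ψ s * (M * (∫ t : EuclideanSpace ℝ (Fin d), cutProfile β lam ‖t‖)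
        + lam ^ (-β) * (lam ^ (d : ℝ) * A)) := by
        refine mul_le_mul_of_nonneg_left ?_ hK
        exact integral_mono hFint.integral_prod_right (hψint.mul_const _) hinner
    _ = K * (lam ^ (d : ℝ) * A) * (M * (∫ t : EuclideanSpace ℝ (Fin d), cutProfile β lam ‖t‖)
        + lam ^ ((d : ℝ) - β) * A) := by
        rw [integral_mul_const, hψA, show (d : ℝ) - β = -β + d by ring, Real.rpow_add hlam]
        ring
    _ ≤ _ := by
        have hA0 : 0 ≤ A := integral_nonneg fun t => abs_nonneg _
        gcongr
        exact integral_cutProfile_le hd hlam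

/-! ### The three regimes -/

/-- The one-dimensional integral in the three regimes, in terms of `δ = d - β`. -/
lemma radial_integral_le {δ lam : ℝ} (hlam : 2 ≤ lam) :
    (δ < 0 → ∫ u in (1 : ℝ)..(1 + lam), u ^ (δ - 1) ≤ 1 / (-δ)) ∧
    (0 < δ → ∫ u in (1 : ℝ)..(1 + lam), u ^ (δ - 1) ≤ 2 ^ δ / δ * lam ^ δ) ∧
    (δ = 0 → ∫ u in (1 : ℝ)..(1 + lam), u ^ (δ - 1) ≤ 2 * Real.log lam) := by
  have h0 : (0 : ℝ) ∉ Set.uIcc (1 : ℝ) (1 + lam) := by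
    rw [Set.uIcc_of_le (by linarith)]
    exact fun h => absurd h.1 (by norm_num)
  have key : δ ≠ 0 → ∫ u in (1 : ℝ)..(1 + lam), u ^ (δ - 1) = ((1 + lam) ^ δ - 1) / δ := by
    intro hδ
    rw [integral_rpow (Or.inr ⟨fun h => hδ (by linarith), h0⟩)]
    simp
  refine ⟨fun h => ?_, fun h => ?_, fun h => ?_⟩
  · rw [key h.ne, ← neg_div_neg_eq]
    have : 0 < (1 + lam) ^ δ := Real.rpow_pos_of_pos (by linarith) _
    exact div_le_div_of_nonneg_right (by linarith) (by linarith)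
  · rw [key h.ne', div_mul_eq_mul_div, ← Real.mul_rpow (by norm_num) (by linarith)]
    have : (1 + lam) ^ δ ≤ (2 * lam) ^ δ :=
      Real.rpow_le_rpow (by linarith) (by linarith) h.le
    exact div_le_div_of_nonneg_right (by linarith) h.le
  · subst h
    have e : ∫ u in (1 : ℝ)..(1 + lam), u ^ ((0 : ℝ) - 1) = Real.log (1 + lam) := by
      have : (fun u : ℝ => u ^ ((0 : ℝ) - 1)) = fun u => u⁻¹ := by
        ext u; rw [zero_sub, Real.rpow_neg_one]
      rw [this, integral_inv h0, div_one]
    rw [e, ← Real.log_rpow (by linarith)]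
    refine Real.log_le_log (by linarith) ?_
    -- `1 + lam ≤ lam ^ 2` because `lam ≥ 2`.
    rw [Real.rpow_two]
    nlinarith

/-- bounds on the truncated second-moment bilinear form. -/
theorem grain_truncated_form_bound (d : ℕ) (hd : 1 ≤ d)
    (Ξ : Set (EuclideanSpace ℝ (Fin d))) (hΞmeas : MeasurableSet Ξ)
    (hΞbdd : Bornology.IsBounded Ξ)
    (α cf : ℝ) (hα₁ : 1 < α) (hα₂ : α < 2) (hcf : 0 < cf)
    (f : ℝ → ℝ) (hfmeas : Measurable f) (hfnonneg : ∀ r, 0 ≤ f r)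
    (hftail : Tendsto (fun r : ℝ => f r / (cf * r ^ (-1 - α))) atTop (𝓝 1))
    (hcont : ContinuousOn
      (fun p : ℝ × EuclideanSpace ℝ (Fin d) =>
        (volume (Ξ ∩ ((· + (p.1 ^ (-(1 : ℝ) / d)) • p.2) ⁻¹' Ξ))).toReal)
      (Set.Ioi (0 : ℝ) ×ˢ Metric.sphere (0 : EuclideanSpace ℝ (Fin d)) 1))
    (hfint : IntegrableOn (fun r => r * f r) (Set.Ioi (0 : ℝ)))
    (φ : EuclideanSpace ℝ (Fin d) → ℝ) (hφmeas : Measurable φ)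
    (hφint : Integrable φ) (hφbdd : ∃ C : ℝ, ∀ t, |φ t| ≤ C) :
    ∃ C : ℝ, 0 < C ∧ ∀ lam : ℝ, 2 ≤ lam →
      ((3 / 2 : ℝ) < α →
        (∫ p : EuclideanSpace ℝ (Fin d) × EuclideanSpace ℝ (Fin d),
            |φ (lam⁻¹ • p.1) * φ (lam⁻¹ • p.2)| * min 1 ((grainCov d Ξ f (p.1 - p.2)) ^ 2))
          ≤ C * lam ^ (d : ℝ)) ∧
      (α < (3 / 2 : ℝ) →
        (∫ p : EuclideanSpace ℝ (Fin d) × EuclideanSpace ℝ (Fin d),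
            |φ (lam⁻¹ • p.1) * φ (lam⁻¹ • p.2)| * min 1 ((grainCov d Ξ f (p.1 - p.2)) ^ 2))
          ≤ C * lam ^ (2 * (d : ℝ) * (2 - α))) ∧
      (α = (3 / 2 : ℝ) →
        (∫ p : EuclideanSpace ℝ (Fin d) × EuclideanSpace ℝ (Fin d),
            |φ (lam⁻¹ • p.1) * φ (lam⁻¹ • p.2)| * min 1 ((grainCov d Ξ f (p.1 - p.2)) ^ 2))
          ≤ C * lam ^ (d : ℝ) * Real.log lam) := by
  obtain ⟨M, hM⟩ := hφbdd
  obtain ⟨K, hK, hKb⟩ := exists_min_sq_le hd hΞbdd hfnonneg hα₁ hcf hftail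
  set β := 2 * (d : ℝ) * (α - 1) with hβ
  have hd0 : (0 : ℝ) < d := by positivity
  have hβ0 : 0 ≤ β := by
    have : 0 < α - 1 := by linarith
    positivity
  set A := ∫ t, |φ t| with hA
  have hA0 : 0 ≤ A := integral_nonneg fun t => abs_nonneg _
  have hM0 : 0 ≤ M := (abs_nonneg _).trans (hM 0)
  set c := M * (d * (volume : Measure (EuclideanSpace ℝ (Fin d))).real (Metric.ball 0 1)) with hc
  have hc0 : 0 ≤ c := by positivity
  set δ := (d : ℝ) - β with hδ
  have hform : ∀ lam : ℝ, 2 ≤ lam →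
      (∫ p : EuclideanSpace ℝ (Fin d) × EuclideanSpace ℝ (Fin d),
        |φ (lam⁻¹ • p.1) * φ (lam⁻¹ • p.2)| * min 1 ((grainCov d Ξ f (p.1 - p.2)) ^ 2)) ≤
      K * A * lam ^ (d : ℝ) * (c * (∫ u in (1 : ℝ)..(1 + lam), u ^ (δ - 1)) + A * lam ^ δ) := by
    intro lam hlam
    refine (form_le hd hφint hM (g := fun t => min 1 ((grainCov d Ξ f t) ^ 2))
      (fun t => le_min zero_le_one (sq_nonneg _)) hK.le hβ0 hKb (by linarith)).trans_eq ?_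
    rw [show (d : ℝ) - 1 - β = δ - 1 by rw [hδ]; ring]
    ring
  have hKA : 0 ≤ K * A := by positivity
  have hδα : δ = (d : ℝ) * (3 - 2 * α) := by rw [hδ, hβ]; ring
  -- The other two implications are vacuous in each case, and the `+ 1` in each constant keeps it
  -- positive when `φ` vanishes almost everywhere.
  rcases lt_trichotomy α (3 / 2) with h | h | h
  · have hδ0 : 0 < δ := by rw [hδα]; exact mul_pos hd0 (by linarith)
    refine ⟨K * A * (c * (2 ^ δ / δ) + A) + 1, by positivity, fun lam hlam =>
      ⟨fun h' => absurd h' (by linarith), fun _ => ?_, fun h' => absurd h' h.ne⟩⟩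
    have hl : 0 < lam := by linarith
    have hJ := (radial_integral_le (δ := δ) hlam).2.1 hδ0
    have e : lam ^ (2 * (d : ℝ) * (2 - α)) = lam ^ (d : ℝ) * lam ^ δ := by
      rw [← Real.rpow_add hl, hδα]; congr 1; ring
    calc _ ≤ _ := hform lam hlam
      _ ≤ K * A * lam ^ (d : ℝ) * (c * (2 ^ δ / δ * lam ^ δ) + A * lam ^ δ) := by gcongr
      _ = K * A * (c * (2 ^ δ / δ) + A) * lam ^ (2 * (d : ℝ) * (2 - α)) := by rw [e]; ring
      _ ≤ _ := by gcongr; linarith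
  · have hδ0 : δ = 0 := by rw [hδα, h]; ring
    refine ⟨K * A * (c * 2 + A / Real.log 2) + 1, ?_, fun lam hlam =>
      ⟨fun h' => absurd h' (by linarith), fun h' => absurd h' (by linarith), fun _ => ?_⟩⟩
    · have := Real.log_pos one_lt_two
      positivity
    have hl : 0 < lam := by linarith
    have hJ := (radial_integral_le (δ := δ) hlam).2.2 hδ0
    have hlog2 := Real.log_pos one_lt_two
    have hlog : Real.log 2 ≤ Real.log lam := Real.log_le_log (by norm_num) hlam
    have hlog0 : 0 < Real.log lam := hlog2.trans_le hlog
    have h1 : A * lam ^ δ ≤ A / Real.log 2 * Real.log lam := by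
      rw [hδ0, Real.rpow_zero, mul_one, div_mul_eq_mul_div, le_div_iff₀ hlog2]
      gcongr
    calc _ ≤ _ := hform lam hlam
      _ ≤ K * A * lam ^ (d : ℝ) * (c * (2 * Real.log lam) + A / Real.log 2 * Real.log lam) := by
        gcongr
      _ = K * A * (c * 2 + A / Real.log 2) * lam ^ (d : ℝ) * Real.log lam := by ring
      _ ≤ _ := by gcongr; linarith
  · have hδ0 : δ < 0 := by rw [hδα]; exact mul_neg_of_pos_of_neg hd0 (by linarith)
    have hδ1 : 0 < -δ := by linarith
    refine ⟨K * A * (c * (1 / (-δ)) + A) + 1, by positivity, fun lam hlam =>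
      ⟨fun _ => ?_, fun h' => absurd h' (by linarith), fun h' => absurd h' h.ne'⟩⟩
    have hl : 0 < lam := by linarith
    have hJ := (radial_integral_le (δ := δ) hlam).1 hδ0
    have h1 : lam ^ δ ≤ 1 := Real.rpow_le_one_of_one_le_of_nonpos (by linarith) hδ0.le
    calc _ ≤ _ := hform lam hlam
      _ ≤ K * A * lam ^ (d : ℝ) * (c * (1 / (-δ)) + A * 1) := by gcongr
      _ = K * A * (c * (1 / (-δ)) + A) * lam ^ (d : ℝ) := by ring
      _ ≤ _ := by gcongr; linarith
end

section
/- Under Assumption LRD and assuming ∫_0^∞ r f(r) dr < ∞, there exists C > 0 such that 0 ≤ r_X(t) ≤ C min(1, ‖t‖^{d(1−α)}) for all t ∈ ℝ^d with t ≠ 0, and r_X(0) ≤ C. -/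
/-!
The overlap of a grain of size `r` with its translate has volume at most `r * |Ξ|` (`overlap_le`), and
it is empty unless `‖t‖ < 2 R r^{1/d}`, where `Ξ` lies in the ball of radius `R`; that is, unless
`r > (‖t‖ / (2R))^d` (`overlap_eq_zero`). Integrating against `f` bounds the covariance both by
`|Ξ| ∫ r f(r) dr` and by `|Ξ|` times the tail of that integral beyond `(‖t‖ / (2R))^d`. As
`f(r) ~ c_f r^{-1-α}`, the tail beyond `ρ` is `O(ρ^{1-α})`, uniformly in `ρ > 0` because the whole
integral is finite (`tail_integral_le`), and `ρ = (‖t‖ / (2R))^d` gives the rate `‖t‖^{d(1-α)}`.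
-/

open scoped BigOperators Pointwise
open MeasureTheory Filter Topology

/-- The first moment of `f` beyond `ρ` is `O(ρ ^ (1 - α))`, uniformly over all `ρ > 0`: large `ρ` is
governed by the tail of `f`, small `ρ` by finiteness of the full moment and `1 - α < 0`. -/
lemma tail_integral_le {α cf : ℝ} (hα₁ : 1 < α) (hcf : 0 < cf) {f : ℝ → ℝ}
    (hfnonneg : ∀ r, 0 ≤ f r)
    (hftail : Tendsto (fun r : ℝ => f r / (cf * r ^ (-1 - α))) atTop (𝓝 1))
    (hfint : IntegrableOn (fun r => r * f r) (Set.Ioi (0 : ℝ))) :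
    ∃ K : ℝ, 0 ≤ K ∧ ∀ ρ : ℝ, 0 < ρ → ∫ r in Set.Ioi ρ, r * f r ≤ K * ρ ^ (1 - α) := by
  have hev : ∀ᶠ r in atTop, f r / (cf * r ^ (-1 - α)) < 2 :=
    hftail.eventually_lt_const (by norm_num)
  obtain ⟨r₁, hr₁⟩ := eventually_atTop.1 hev
  set r₀ := max r₁ 1
  have hr₀pos : 0 < r₀ := lt_of_lt_of_le one_pos (le_max_right _ _)
  set M := ∫ r in Set.Ioi (0 : ℝ), r * f r with hM
  have hnn : ∀ r ∈ Set.Ioi (0 : ℝ), 0 ≤ r * f r := fun r hr => mul_nonneg (le_of_lt hr) (hfnonneg r)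
  have hM0 : 0 ≤ M := setIntegral_nonneg measurableSet_Ioi hnn
  have hA : 0 ≤ 2 * cf / (α - 1) := div_nonneg (by positivity) (by linarith)
  have hB : 0 ≤ M * r₀ ^ (α - 1) := mul_nonneg hM0 (Real.rpow_nonneg hr₀pos.le _)
  refine ⟨2 * cf / (α - 1) + M * r₀ ^ (α - 1), add_nonneg hA hB, fun ρ hρ => ?_⟩
  have hρp : 0 < ρ ^ (1 - α) := Real.rpow_pos_of_pos hρ _
  rcases le_total r₀ ρ with h | h
  · have hint : IntegrableOn (fun r : ℝ => r ^ (-α)) (Set.Ioi ρ) :=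
      integrableOn_Ioi_rpow_of_lt (by linarith) hρ
    have h1 : ∫ r in Set.Ioi ρ, r * f r ≤ ∫ r in Set.Ioi ρ, 2 * cf * r ^ (-α) := by
      refine setIntegral_mono_on (hfint.mono_set (Set.Ioi_subset_Ioi hρ.le)) (hint.const_mul _)
        measurableSet_Ioi fun r hr => ?_
      have hr0 : 0 < r := hρ.trans hr
      have hd : 0 < cf * r ^ (-1 - α) := mul_pos hcf (Real.rpow_pos_of_pos hr0 _)
      have hlt := hr₁ r ((le_max_left _ _).trans (h.trans (le_of_lt hr)))
      rw [div_lt_iff₀ hd] at hlt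
      have he : r ^ (-α) = r * r ^ (-1 - α) := by
        rw [← Real.rpow_one_add' hr0.le (by linarith)]
        congr 1
        ring
      rw [he]
      nlinarith
    rw [integral_const_mul, integral_Ioi_rpow_of_lt (by linarith) hρ] at h1
    have h2 : 2 * cf * (-ρ ^ (-α + 1) / (-α + 1)) = 2 * cf / (α - 1) * ρ ^ (1 - α) := by
      rw [show -α + 1 = 1 - α by ring, neg_div, ← div_neg, neg_sub]
      ring
    rw [h2] at h1
    nlinarith [mul_nonneg hB hρp.le]
  · have h1 : ∫ r in Set.Ioi ρ, r * f r ≤ M :=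
      setIntegral_mono_set hfint (ae_restrict_of_forall_mem measurableSet_Ioi hnn)
        (Set.Ioi_subset_Ioi hρ.le).eventuallyLE
    have h2 : 1 ≤ r₀ ^ (α - 1) * ρ ^ (1 - α) := by
      rw [← neg_sub α 1, Real.rpow_neg hρ.le, ← div_eq_mul_inv,
        one_le_div (Real.rpow_pos_of_pos hρ _)]
      exact Real.rpow_le_rpow hρ.le h (by linarith)
    nlinarith [mul_le_mul_of_nonneg_left h2 hM0, mul_nonneg hA hρp.le]

lemma overlap_le_s13 {d : ℕ} (hd : 1 ≤ d) {Ξ : Set (EuclideanSpace ℝ (Fin d))}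
    (hΞbdd : Bornology.IsBounded Ξ) {r : ℝ} (hr : 0 < r) (t : EuclideanSpace ℝ (Fin d)) :
    (volume ((r ^ ((1 : ℝ) / d)) • Ξ ∩ ((· + t) ⁻¹' ((r ^ ((1 : ℝ) / d)) • Ξ)))).toReal
      ≤ (volume Ξ).toReal * r := by
  have hpow : (r ^ ((1 : ℝ) / d)) ^ d = r := by
    rw [one_div]
    exact Real.rpow_inv_natCast_pow hr.le (by omega)
  have hs : volume ((r ^ ((1 : ℝ) / d)) • Ξ) = ENNReal.ofReal r * volume Ξ := by
    rw [Measure.addHaar_smul, finrank_euclideanSpace_fin, hpow, abs_of_pos hr]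
  have hfin : volume Ξ ≠ ⊤ := hΞbdd.measure_lt_top.ne
  refine (ENNReal.toReal_mono ?_ (measure_mono Set.inter_subset_left)).trans_eq ?_
  · rw [hs]
    exact ENNReal.mul_ne_top ENNReal.ofReal_ne_top hfin
  · rw [hs, ENNReal.toReal_mul, ENNReal.toReal_ofReal hr.le, mul_comm]

/-- Grains contained in balls of radius `r^{1/d} R` are separated by a shift of length at least
`2 R r^{1/d}`. -/
lemma overlap_eq_zero {d : ℕ} (hd : 1 ≤ d) {Ξ : Set (EuclideanSpace ℝ (Fin d))} {R : ℝ}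
    (hR : 0 < R) (hΞ : Ξ ⊆ Metric.ball 0 R) {r : ℝ} (hr : 0 < r) (t : EuclideanSpace ℝ (Fin d))
    (hrt : r ≤ (‖t‖ / (2 * R)) ^ d) :
    (volume ((r ^ ((1 : ℝ) / d)) • Ξ ∩ ((· + t) ⁻¹' ((r ^ ((1 : ℝ) / d)) • Ξ)))).toReal = 0 := by
  have hrp : 0 < r ^ ((1 : ℝ) / d) := Real.rpow_pos_of_pos hr _
  have hle : r ^ ((1 : ℝ) / d) ≤ ‖t‖ / (2 * R) := by
    refine le_of_pow_le_pow_left₀ (n := d) (by omega) (by positivity) ?_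
    rw [one_div, Real.rpow_inv_natCast_pow hr.le (by omega)]
    exact hrt
  rw [le_div_iff₀ (by positivity)] at hle
  have hempty : (r ^ ((1 : ℝ) / d)) • Ξ ∩ ((· + t) ⁻¹' ((r ^ ((1 : ℝ) / d)) • Ξ)) = ∅ := by
    rw [Set.eq_empty_iff_forall_notMem]
    rintro x ⟨⟨u, hu, rfl⟩, v, hv, hvt⟩
    have hu' := mem_ball_zero_iff.1 (hΞ hu)
    have hv' := mem_ball_zero_iff.1 (hΞ hv)
    simp only at hvt
    have ht : t = (r ^ ((1 : ℝ) / d)) • (v - u) := by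
      rw [smul_sub, hvt, add_sub_cancel_left]
    have hn : ‖t‖ ≤ r ^ ((1 : ℝ) / d) * (‖v‖ + ‖u‖) := by
      conv_lhs => rw [ht]
      rw [norm_smul, Real.norm_of_nonneg hrp.le]
      exact mul_le_mul_of_nonneg_left (norm_sub_le v u) hrp.le
    nlinarith
  rw [hempty]
  simp

/-- pointwise bound on the covariance of the random grain model. -/
theorem grainCov_pointwise_bound (d : ℕ) (hd : 1 ≤ d)
    (Ξ : Set (EuclideanSpace ℝ (Fin d))) (hΞmeas : MeasurableSet Ξ)
    (hΞbdd : Bornology.IsBounded Ξ)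
    (α cf : ℝ) (hα₁ : 1 < α) (hα₂ : α < 2) (hcf : 0 < cf)
    (f : ℝ → ℝ) (hfmeas : Measurable f) (hfnonneg : ∀ r, 0 ≤ f r)
    (hftail : Tendsto (fun r : ℝ => f r / (cf * r ^ (-1 - α))) atTop (𝓝 1))
    (hcont : ContinuousOn
      (fun p : ℝ × EuclideanSpace ℝ (Fin d) =>
        (volume (Ξ ∩ ((· + (p.1 ^ (-(1 : ℝ) / d)) • p.2) ⁻¹' Ξ))).toReal)
      (Set.Ioi (0 : ℝ) ×ˢ Metric.sphere (0 : EuclideanSpace ℝ (Fin d)) 1))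
    (hfint : IntegrableOn (fun r => r * f r) (Set.Ioi (0 : ℝ))) :
    ∃ C : ℝ, 0 < C ∧
      (∀ t : EuclideanSpace ℝ (Fin d), t ≠ 0 →
        0 ≤ grainCov d Ξ f t ∧
        grainCov d Ξ f t ≤ C * min 1 (‖t‖ ^ ((d : ℝ) * (1 - α)))) ∧
      grainCov d Ξ f 0 ≤ C := by
  obtain ⟨R, hR, hΞR⟩ := hΞbdd.subset_ball_lt 0 0
  obtain ⟨K, hK, htail⟩ := tail_integral_le hα₁ hcf hfnonneg hftail hfint
  set V := (volume Ξ).toReal with hV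
  have hV0 : 0 ≤ V := ENNReal.toReal_nonneg
  set M := ∫ r in Set.Ioi (0 : ℝ), r * f r with hM
  have hM0 : 0 ≤ M :=
    setIntegral_nonneg measurableSet_Ioi fun r hr => mul_nonneg (le_of_lt hr) (hfnonneg r)
  have hnonneg : ∀ t, 0 ≤ grainCov d Ξ f t := fun t =>
    integral_nonneg fun r => mul_nonneg ENNReal.toReal_nonneg (hfnonneg r)
  have hbound : ∀ t, grainCov d Ξ f t ≤ V * M := by
    intro t
    rw [hM, ← integral_const_mul]
    refine integral_mono_of_nonneg
      (ae_of_all _ fun r => mul_nonneg ENNReal.toReal_nonneg (hfnonneg r)) (hfint.const_mul V)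
      (ae_restrict_of_forall_mem measurableSet_Ioi fun r hr => ?_)
    exact (mul_le_mul_of_nonneg_right (overlap_le_s13 hd hΞbdd hr t) (hfnonneg r)).trans_eq
      (mul_assoc _ _ _)
  -- The factor `(2R)^{-d(1-α)}` appears when `ρ ^ (1 - α)` is rewritten in terms of `‖t‖`.
  set D := V * K * ((2 * R) ^ ((d : ℝ) * (1 - α)))⁻¹ with hD
  have hD0 : 0 ≤ D := by positivity
  have hVM : 0 ≤ V * M := mul_nonneg hV0 hM0
  have hdecay : ∀ t, t ≠ 0 → grainCov d Ξ f t ≤ D * ‖t‖ ^ ((d : ℝ) * (1 - α)) := by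
    intro t ht
    have htp : 0 < ‖t‖ := norm_pos_iff.2 ht
    set ρ := (‖t‖ / (2 * R)) ^ d with hρ
    have hρ0 : 0 < ρ := by positivity
    have hsub : Set.Ioi ρ ⊆ Set.Ioi 0 := Set.Ioi_subset_Ioi hρ0.le
    have h1 : grainCov d Ξ f t ≤
        ∫ r in Set.Ioi (0 : ℝ), (Set.Ioi ρ).indicator (fun r => V * (r * f r)) r := by
      refine integral_mono_of_nonneg
        (ae_of_all _ fun r => mul_nonneg ENNReal.toReal_nonneg (hfnonneg r))
        ((hfint.const_mul V).indicator measurableSet_Ioi)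
        (ae_restrict_of_forall_mem measurableSet_Ioi fun r hr => ?_)
      by_cases hrρ : r ∈ Set.Ioi ρ
      · rw [Set.indicator_of_mem hrρ]
        exact (mul_le_mul_of_nonneg_right (overlap_le_s13 hd hΞbdd hr t) (hfnonneg r)).trans_eq
          (mul_assoc _ _ _)
      · rw [Set.indicator_of_notMem hrρ]
        simp only
        rw [overlap_eq_zero hd hR hΞR hr t (not_lt.1 hrρ), zero_mul]
    rw [setIntegral_indicator measurableSet_Ioi, Set.inter_eq_self_of_subset_right hsub,
      integral_const_mul] at h1
    have hpow : ρ ^ (1 - α) =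
        ((2 * R) ^ ((d : ℝ) * (1 - α)))⁻¹ * ‖t‖ ^ ((d : ℝ) * (1 - α)) := by
      rw [hρ, ← Real.rpow_natCast, ← Real.rpow_mul (by positivity),
        Real.div_rpow htp.le (by positivity), div_eq_inv_mul]
    calc grainCov d Ξ f t ≤ V * (K * ρ ^ (1 - α)) :=
          h1.trans (mul_le_mul_of_nonneg_left (htail ρ hρ0) hV0)
      _ = D * ‖t‖ ^ ((d : ℝ) * (1 - α)) := by rw [hpow, hD]; ring
  refine ⟨V * M + D + 1, by positivity, fun t ht => ⟨hnonneg t, ?_⟩, ?_⟩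
  · have hp : 0 ≤ ‖t‖ ^ ((d : ℝ) * (1 - α)) := by positivity
    rw [mul_min_of_nonneg _ _ (by positivity), mul_one]
    refine le_min (by linarith [hbound t]) ((hdecay t ht).trans ?_)
    exact mul_le_mul_of_nonneg_right (by linarith) hp
  · linarith [hbound 0]
end

section
/- Let α ∈ (1,2), c_f > 0, and let f: (0,∞) → [0,∞) be measurable with f(r)/(c_f r^{-1-α}) → 1 as r → ∞ and ∫_0^∞ r f(r) dr < ∞. Then λ^{1+α} ∫_0^∞ min(r, r²) f(λ r) dr → c_f ∫_0^∞ min(r, r²) r^{-α-1} dr as λ → ∞, and the limiting integral is finite. -/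
/-!
Choose `M > 0` such that `f s ≤ 2 * cf * s ^ (-1 - α)` for `s > M`, and cut `f` at `M`. The tail part
`f * 1_{s > M}` is handled by dominated convergence: after rescaling it is bounded by
`2 * cf * min r (r ^ 2) * r ^ (-α - 1)`, which is integrable because `1 < α < 2`, and it converges
pointwise since `lam ^ (1 + α) * f (lam * r) → cf * r ^ (-1 - α)`. For the part `h = f * 1_{s ≤ M}`, the
bound `min r (r ^ 2) ≤ r ^ 2` and the substitution `s = lam * r` give the estimate
`lam ^ (α - 2) * ∫ s ^ 2 * h s`, where the integral is finite since `s ^ 2 * h s ≤ M * (s * f s)`;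
this tends to `0` because `α < 2`.
-/

open MeasureTheory Filter Topology

lemma integrableOn_min_mul_rpow (α : ℝ) (hα₁ : 1 < α) (hα₂ : α < 2) :
    IntegrableOn (fun r : ℝ => min r (r ^ 2) * r ^ (-α - 1)) (Set.Ioi (0 : ℝ)) := by
  rw [← Set.Ioc_union_Ioi_eq_Ioi (zero_le_one (α := ℝ))]
  refine IntegrableOn.union ?_ ?_
  · have h : IntegrableOn (fun r : ℝ => r ^ (1 - α)) (Set.Ioc 0 1) :=
      (intervalIntegrable_iff_integrableOn_Ioc_of_le zero_le_one).1
        (intervalIntegral.intervalIntegrable_rpow' (by linarith))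
    refine h.congr_fun (fun r hr => ?_) measurableSet_Ioc
    have h0 : 0 < r := hr.1
    have h1 : r ^ 2 ≤ r := by nlinarith [hr.2]
    simp only [min_eq_right h1]
    rw [← Real.rpow_natCast r 2, ← Real.rpow_add h0]
    congr 1
    push_cast
    ring
  · have h : IntegrableOn (fun r : ℝ => r ^ (-α)) (Set.Ioi 1) :=
      integrableOn_Ioi_rpow_of_lt (by linarith) zero_lt_one
    refine h.congr_fun (fun r hr => ?_) measurableSet_Ioi
    have hr1 : 1 < r := hr
    have h0 : 0 < r := by linarith
    have h1 : r ≤ r ^ 2 := by nlinarith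
    simp only [min_eq_left h1]
    nth_rewrite 2 [← Real.rpow_one r]
    rw [← Real.rpow_add h0]
    congr 1
    ring

/-- The scaling weight cancels the dilation of the power law. -/
lemma scaling_cancel (α lam r : ℝ) (hl : 0 < lam) (hr : 0 < r) :
    lam ^ (1 + α) * (lam * r) ^ (-1 - α) = r ^ (-α - 1) := by
  rw [Real.mul_rpow hl.le hr.le, ← mul_assoc, ← Real.rpow_add hl,
    show 1 + α + (-1 - α) = 0 by ring, Real.rpow_zero, one_mul,
    show -1 - α = -α - 1 by ring]

/-- A function with `s ^ 2 * h s` integrable contributes nothing in the limit. -/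
lemma near_part (α : ℝ) (hα₂ : α < 2) (h : ℝ → ℝ) (hm : Measurable h) (h0 : ∀ r, 0 ≤ h r)
    (hint : IntegrableOn (fun s => s ^ 2 * h s) (Set.Ioi (0 : ℝ))) :
    (∀ lam : ℝ, 0 < lam →
      IntegrableOn (fun r => min r (r ^ 2) * h (lam * r)) (Set.Ioi (0 : ℝ))) ∧
    Tendsto (fun lam : ℝ =>
        lam ^ (1 + α) * ∫ r in Set.Ioi (0 : ℝ), min r (r ^ 2) * h (lam * r)) atTop (𝓝 0) := by
  have hsq : ∀ lam : ℝ, 0 < lam →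
      IntegrableOn (fun r => r ^ 2 * h (lam * r)) (Set.Ioi (0 : ℝ)) := by
    intro lam hl
    have h1 : IntegrableOn (fun r => (lam * r) ^ 2 * h (lam * r)) (Set.Ioi (0 : ℝ)) := by
      have := (integrableOn_Ioi_comp_mul_left_iff (fun s => s ^ 2 * h s) 0 hl).2
        (by simpa using hint)
      simpa using this
    refine IntegrableOn.congr_fun (h1.const_mul ((lam ^ 2)⁻¹)) (fun r _ => ?_) measurableSet_Ioi
    field_simp
  have hmin : ∀ lam : ℝ, 0 < lam →
      IntegrableOn (fun r => min r (r ^ 2) * h (lam * r)) (Set.Ioi (0 : ℝ)) := by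
    intro lam hl
    refine (hsq lam hl).mono' (by fun_prop) ?_
    filter_upwards [ae_restrict_mem measurableSet_Ioi] with r hr
    have hr0 : 0 < r := hr
    rw [Real.norm_of_nonneg (mul_nonneg (le_min hr0.le (sq_nonneg r)) (h0 _))]
    exact mul_le_mul_of_nonneg_right (min_le_right _ _) (h0 _)
  refine ⟨hmin, ?_⟩
  have hlim : Tendsto (fun lam : ℝ => lam ^ (-(2 - α)) * ∫ s in Set.Ioi (0 : ℝ), s ^ 2 * h s)
      atTop (𝓝 0) := by
    simpa using (tendsto_rpow_neg_atTop (by linarith : 0 < 2 - α)).mul_const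
      (∫ s in Set.Ioi (0 : ℝ), s ^ 2 * h s)
  refine squeeze_zero' ?_ ?_ hlim
  · filter_upwards [eventually_gt_atTop 0] with lam hl
    refine mul_nonneg (Real.rpow_nonneg hl.le _) (setIntegral_nonneg measurableSet_Ioi ?_)
    intro r hr
    have hr0 : 0 < r := hr
    exact mul_nonneg (le_min hr0.le (sq_nonneg r)) (h0 _)
  · filter_upwards [eventually_gt_atTop 0] with lam hl
    have hle : ∫ r in Set.Ioi (0 : ℝ), min r (r ^ 2) * h (lam * r) ≤
        ∫ r in Set.Ioi (0 : ℝ), r ^ 2 * h (lam * r) :=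
      setIntegral_mono_on (hmin lam hl) (hsq lam hl) measurableSet_Ioi
        fun r _ => mul_le_mul_of_nonneg_right (min_le_right _ _) (h0 _)
    have hsub : ∫ r in Set.Ioi (0 : ℝ), r ^ 2 * h (lam * r) =
        lam ^ (-3 : ℝ) * ∫ s in Set.Ioi (0 : ℝ), s ^ 2 * h s := by
      have h1 := integral_comp_mul_left_Ioi (fun s => s ^ 2 * h s) 0 hl
      simp only [mul_zero, smul_eq_mul, mul_pow, mul_assoc] at h1
      rw [integral_const_mul] at h1
      have h3 : lam ^ (-3 : ℝ) = (lam ^ 3)⁻¹ := by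
        rw [Real.rpow_neg hl.le]
        norm_cast
      rw [h3]
      field_simp at h1 ⊢
      linarith
    calc _ ≤ lam ^ (1 + α) * (lam ^ (-3 : ℝ) * ∫ s in Set.Ioi (0 : ℝ), s ^ 2 * h s) := by
          rw [← hsub]
          exact mul_le_mul_of_nonneg_left hle (Real.rpow_nonneg hl.le _)
      _ = _ := by
          rw [← mul_assoc, ← Real.rpow_add hl]
          ring_nf

/-- convergence of the rescaled truncated tail integral. -/
theorem scaled_tail_integral_limit (α cf : ℝ) (hα₁ : 1 < α) (hα₂ : α < 2) (hcf : 0 < cf)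
    (f : ℝ → ℝ) (hfmeas : Measurable f) (hfnonneg : ∀ r, 0 ≤ f r)
    (hftail : Tendsto (fun r : ℝ => f r / (cf * r ^ (-1 - α))) atTop (𝓝 1))
    (hfint : IntegrableOn (fun r => r * f r) (Set.Ioi (0 : ℝ))) :
    IntegrableOn (fun r : ℝ => min r (r ^ 2) * r ^ (-α - 1)) (Set.Ioi (0 : ℝ)) ∧
    Tendsto (fun lam : ℝ =>
        lam ^ (1 + α) * ∫ r in Set.Ioi (0 : ℝ), min r (r ^ 2) * f (lam * r))
      atTop
      (𝓝 (cf * ∫ r in Set.Ioi (0 : ℝ), min r (r ^ 2) * r ^ (-α - 1))) := by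
  have hI := integrableOn_min_mul_rpow α hα₁ hα₂
  refine ⟨hI, ?_⟩
  obtain ⟨M, hM0, hM⟩ : ∃ M : ℝ, 0 < M ∧ ∀ s, M < s → f s ≤ 2 * (cf * s ^ (-1 - α)) := by
    obtain ⟨N, hN⟩ := eventually_atTop.1 (hftail.eventually_lt_const one_lt_two)
    refine ⟨max N 1, by positivity, fun s hs => ?_⟩
    have hs0 : 0 < s := lt_trans (by positivity) hs
    have := hN s ((le_max_left _ _).trans hs.le)
    rw [div_lt_iff₀ (by positivity)] at this
    exact this.le
  set g : ℝ → ℝ := (Set.Ioi M).indicator f with hg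
  set h : ℝ → ℝ := (Set.Iic M).indicator f with hh
  have hgm : Measurable g := hfmeas.indicator measurableSet_Ioi
  have hhm : Measurable h := hfmeas.indicator measurableSet_Iic
  have hg0 : ∀ s, 0 ≤ g s := fun s => Set.indicator_nonneg (fun _ _ => hfnonneg _) s
  have hh0 : ∀ s, 0 ≤ h s := fun s => Set.indicator_nonneg (fun _ _ => hfnonneg _) s
  have hsplit : ∀ s, f s = g s + h s := by
    intro s
    by_cases hs : s ≤ M
    · simp [hg, hh, hs, not_lt.2 hs]
    · simp [hg, hh, hs, not_le.1 hs]
  have hgle : ∀ s, 0 < s → g s ≤ 2 * (cf * s ^ (-1 - α)) := by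
    intro s hs
    by_cases hsM : M < s
    · simpa [hg, hsM] using hM s hsM
    · have : 0 ≤ 2 * (cf * s ^ (-1 - α)) := by positivity
      simpa [hg, hsM] using this
  have hhint : IntegrableOn (fun s => s ^ 2 * h s) (Set.Ioi (0 : ℝ)) := by
    refine (hfint.const_mul M).mono' (by fun_prop) ?_
    filter_upwards [ae_restrict_mem measurableSet_Ioi] with s hs
    have hs0 : 0 < s := hs
    rw [Real.norm_of_nonneg (mul_nonneg (sq_nonneg s) (hh0 _))]
    have hsf : 0 ≤ s * f s := mul_nonneg hs0.le (hfnonneg s)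
    by_cases hsM : s ≤ M
    · have : h s = f s := by simp [hh, hsM]
      rw [this]
      nlinarith
    · have : h s = 0 := by simp [hh, hsM]
      rw [this, mul_zero]
      positivity
  obtain ⟨hhI, hhlim⟩ := near_part α hα₂ h hhm hh0 hhint
  have hbound : ∀ lam : ℝ, 0 < lam → ∀ r : ℝ, 0 < r →
      ‖lam ^ (1 + α) * (min r (r ^ 2) * g (lam * r))‖ ≤
        2 * cf * (min r (r ^ 2) * r ^ (-α - 1)) := by
    intro lam hl r hr
    have hmn : 0 ≤ min r (r ^ 2) := le_min hr.le (sq_nonneg r)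
    have hlp : 0 ≤ lam ^ (1 + α) := Real.rpow_nonneg hl.le _
    rw [Real.norm_of_nonneg (mul_nonneg hlp (mul_nonneg hmn (hg0 _)))]
    calc _ ≤ lam ^ (1 + α) * (min r (r ^ 2) * (2 * (cf * (lam * r) ^ (-1 - α)))) := by
          gcongr
          exact hgle _ (mul_pos hl hr)
      _ = 2 * cf * (min r (r ^ 2) * (lam ^ (1 + α) * (lam * r) ^ (-1 - α))) := by ring
      _ = _ := by rw [scaling_cancel α lam r hl hr]
  have hglim : Tendsto (fun lam : ℝ =>
      ∫ r in Set.Ioi (0 : ℝ), lam ^ (1 + α) * (min r (r ^ 2) * g (lam * r))) atTop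
      (𝓝 (∫ r in Set.Ioi (0 : ℝ), cf * (min r (r ^ 2) * r ^ (-α - 1)))) := by
    refine tendsto_integral_filter_of_dominated_convergence
      (fun r => 2 * cf * (min r (r ^ 2) * r ^ (-α - 1))) ?_ ?_ (hI.const_mul _) ?_
    · exact Eventually.of_forall fun lam => by fun_prop
    · filter_upwards [eventually_gt_atTop 0] with lam hl
      filter_upwards [ae_restrict_mem measurableSet_Ioi] with r hr
      exact hbound lam hl r hr
    · filter_upwards [ae_restrict_mem measurableSet_Ioi] with r hr
      have hr0 : 0 < r := hr
      have hlr : Tendsto (fun lam : ℝ => lam * r) atTop atTop :=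
        tendsto_id.atTop_mul_const hr0
      have := (hftail.comp hlr).const_mul (cf * (min r (r ^ 2) * r ^ (-α - 1)))
      rw [mul_one] at this
      refine this.congr' ?_
      filter_upwards [eventually_gt_atTop 0, hlr.eventually_gt_atTop M] with lam hl hlM
      have hgf : g (lam * r) = f (lam * r) := by simp [hg, hlM]
      have hp : 0 < (lam * r) ^ (-1 - α) := Real.rpow_pos_of_pos (mul_pos hl hr0) _
      rw [hgf, ← scaling_cancel α lam r hl hr0]
      simp only [Function.comp_apply]
      field_simp
  have hgI : ∀ lam : ℝ, 0 < lam →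
      IntegrableOn (fun r => min r (r ^ 2) * g (lam * r)) (Set.Ioi (0 : ℝ)) := by
    intro lam hl
    have h1 : IntegrableOn (fun r => lam ^ (1 + α) * (min r (r ^ 2) * g (lam * r)))
        (Set.Ioi (0 : ℝ)) := by
      refine (hI.const_mul (2 * cf)).mono' (by fun_prop) ?_
      filter_upwards [ae_restrict_mem measurableSet_Ioi] with r hr
      exact hbound lam hl r hr
    have hlp : 0 < lam ^ (1 + α) := Real.rpow_pos_of_pos hl _
    refine IntegrableOn.congr_fun (h1.const_mul (lam ^ (1 + α))⁻¹) (fun r _ => ?_) measurableSet_Ioi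
    field_simp
  have hsum := hglim.add hhlim
  rw [add_zero, integral_const_mul] at hsum
  refine hsum.congr' ?_
  filter_upwards [eventually_gt_atTop 0] with lam hl
  rw [integral_const_mul, ← mul_add, ← integral_add (hgI lam hl) (hhI lam hl)]
  simp only [hsplit, mul_add]
end

section
/- For every a ∈ ℝ, μ > 0 and k ∈ ℕ, the series ∑_{x=0}^∞ p(x; μ) e^{a x} P_k(x; μ) converges absolutely and μ^{-k} ∑_{x=0}^∞ p(x; μ) e^{a x} P_k(x; μ) = (e^a − 1)^k e^{(e^a − 1) μ}; that is, the Charlier coefficients of G(x) = e^{a x} are c_G(k; μ) = (e^a − 1)^k e^{(e^a − 1) μ}. -/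
/-!
The polynomial `P_k(·; μ)` is a binomial combination of falling factorials, so the claim reduces to
the (unnormalised) factorial moments of a Poisson law, `∑ₓ tˣ/x! · x(x-1)⋯(x-j+1) = tʲ eᵗ`
(`hasSum_pow_div_factorial_mul_descFactorial`). Multiplying the Poisson weight by `e^{ax}` replaces
`μˣ` by `tˣ` with `t = μ eᵃ`. Summing over `j`, the binomial theorem gives
`e^{-μ} (t - μ)ᵏ eᵗ`, and `t - μ = μ (eᵃ - 1)`.
-/

open scoped BigOperators
open MeasureTheory Filter Topology

/-- Charlier polynomial `P_k(x; μ)`. -/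
noncomputable def charlier (μ : ℝ) (k x : ℕ) : ℝ :=
  ∑ j ∈ Finset.range (k + 1),
    (k.choose j : ℝ) * (-μ) ^ (k - j) * (x.descFactorial j : ℝ)

/-- Poisson probability mass function `p(x; μ)`. -/
noncomputable def poissonPMF (μ : ℝ) (x : ℕ) : ℝ :=
  Real.exp (-μ) * μ ^ x / (x.factorial : ℝ)

/-- Backward difference operator `D₋`. -/
def Dminus (g : ℕ → ℝ) : ℕ → ℝ :=
  fun x => g x - if x = 0 then 0 else g (x - 1)

/-- Forward difference operator `D₊`. -/
def Dplus (g : ℕ → ℝ) : ℕ → ℝ :=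
  fun x => g (x + 1) - g x

/-- Bivariate Poisson probability mass function `p(x, y; μ₁, μ₂, μ₃)`. -/
noncomputable def poissonPMF₂ (μ₁ μ₂ μ₃ : ℝ) (x y : ℕ) : ℝ :=
  ∑ j ∈ Finset.range (min x y + 1),
    poissonPMF (μ₁ - μ₃) (x - j) * poissonPMF (μ₂ - μ₃) (y - j) * poissonPMF μ₃ j

/-- Charlier coefficient `c_G(k; μ)`. -/
noncomputable def charlierCoeff (μ : ℝ) (G : ℕ → ℝ) (k : ℕ) : ℝ :=
  (μ ^ k)⁻¹ * ∑' x : ℕ, poissonPMF μ x * G x * charlier μ k x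

/-- Factorial moments of the Poisson law, without the factor `e^{-t}`: the terms with `x < j` vanish
and the remaining ones are an index shift of the exponential series. -/
theorem hasSum_pow_div_factorial_mul_descFactorial (t : ℝ) (j : ℕ) :
    HasSum (fun x : ℕ => t ^ x / (x.factorial : ℝ) * (x.descFactorial j : ℝ))
      (t ^ j * Real.exp t) := by
  have hexp : HasSum (fun n : ℕ => t ^ n / (n.factorial : ℝ)) (Real.exp t) := by
    rw [Real.exp_eq_exp_ℝ]
    exact NormedSpace.expSeries_div_hasSum_exp t
  have hzero : ∑ x ∈ Finset.range j,
      t ^ x / (x.factorial : ℝ) * (x.descFactorial j : ℝ) = 0 :=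
    Finset.sum_eq_zero fun x hx => by
      simp [Nat.descFactorial_of_lt (Finset.mem_range.mp hx)]
  rw [← hasSum_nat_add_iff' j, hzero, sub_zero]
  refine (hexp.mul_left (t ^ j)).congr_fun fun n => ?_
  have hfac : ((n + j).factorial : ℝ) = n.factorial * (n + j).descFactorial j := by
    have := Nat.factorial_mul_descFactorial (Nat.le_add_left j n)
    rw [Nat.add_sub_cancel] at this
    exact_mod_cast this.symm
  have hn : (n.factorial : ℝ) ≠ 0 := by positivity
  have hd : ((n + j).descFactorial j : ℝ) ≠ 0 := by
    exact_mod_cast (Nat.descFactorial_pos.mpr (Nat.le_add_left j n)).ne'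
  rw [hfac]
  field_simp
  ring

theorem hasSum_poissonPMF_mul_exp_mul_charlier (a μ : ℝ) (k : ℕ) :
    HasSum (fun x : ℕ => poissonPMF μ x * Real.exp (a * x) * charlier μ k x)
      (Real.exp (-μ) * Real.exp (μ * Real.exp a) * (μ * Real.exp a - μ) ^ k) := by
  have hsum := hasSum_sum (s := Finset.range (k + 1)) fun j _ =>
    (hasSum_pow_div_factorial_mul_descFactorial (μ * Real.exp a) j).mul_left
      (Real.exp (-μ) * ((k.choose j : ℝ) * (-μ) ^ (k - j)))
  convert hsum using 1
  · rfl
  · funext x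
    rw [poissonPMF, charlier, Finset.mul_sum, mul_pow, ← Real.exp_nat_mul, mul_comm (x : ℝ) a]
    exact Finset.sum_congr rfl fun j _ => by ring
  · rw [sub_eq_add_neg, add_pow, Finset.mul_sum]
    exact Finset.sum_congr rfl fun j _ => by ring

/-- Charlier coefficients of the exponential function `G(x) = e^{ax}`. -/
theorem charlierCoeff_exponential (a μ : ℝ) (hμ : 0 < μ) (k : ℕ) :
    Summable (fun x : ℕ => poissonPMF μ x * Real.exp (a * x) * charlier μ k x) ∧
    (μ ^ k)⁻¹ * ∑' x : ℕ, poissonPMF μ x * Real.exp (a * x) * charlier μ k x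
      = (Real.exp a - 1) ^ k * Real.exp ((Real.exp a - 1) * μ) := by
  have h := hasSum_poissonPMF_mul_exp_mul_charlier a μ k
  refine ⟨h.summable, ?_⟩
  have hexp : Real.exp ((Real.exp a - 1) * μ) = Real.exp (-μ) * Real.exp (μ * Real.exp a) := by
    rw [← Real.exp_add]
    ring_nf
  have hpow : (μ * Real.exp a - μ) ^ k = μ ^ k * (Real.exp a - 1) ^ k := by
    rw [← mul_pow]
    ring
  rw [h.tsum_eq, hexp, hpow]
  field_simp
end

section
/- Let μ₁, μ₂ > 0, 0 ≤ μ₃ < min(μ₁, μ₂) and a ∈ ℝ. Then ∑_{x=0}^∞ ∑_{y=0}^∞ p(x, y; μ₁, μ₂, μ₃) e^{a(x+y)} − (∑_{x=0}^∞ p(x; μ₁) e^{a x}) (∑_{y=0}^∞ p(y; μ₂) e^{a y}) = e^{(e^a − 1)(μ₁ + μ₂)} (e^{(e^a − 1)² μ₃} − 1), all series converging absolutely. -/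
/-!
A bivariate Poisson pair is `(U + J, V + J)` with `U`, `V`, `J` independent Poisson variables of
means `μ₁ - μ₃`, `μ₂ - μ₃`, `μ₃`. Hence `E[exp (a (X + Y))]` is the product of the Poisson moment
generating functions of `U` and `V` at `a` and of `J` at `2a` (`hasSum_poissonPMF₂_mul_exp`), where
`E[exp (t N)] = exp (μ (exp t - 1))` for `N` Poisson of mean `μ` (`hasSum_poissonPMF_mul_exp`).
The covariance formula is then the identity
`(μ₁ - μ₃) (z - 1) + (μ₂ - μ₃) (z - 1) + μ₃ (z² - 1) = (μ₁ + μ₂) (z - 1) + μ₃ (z - 1)²` at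
`z = exp a`. All terms are nonnegative, which gives absolute convergence and permits the
rearrangement of the triple series.
-/


open scoped BigOperators
open MeasureTheory Filter Topology

/-- The moment generating function of the Poisson distribution, with its convergence. -/
lemma hasSum_poissonPMF_mul_exp (μ t : ℝ) :
    HasSum (fun x : ℕ => poissonPMF μ x * Real.exp (t * x))
      (Real.exp (μ * (Real.exp t - 1))) := by
  have h := (NormedSpace.expSeries_div_hasSum_exp (μ * Real.exp t)).mul_left (Real.exp (-μ))
  rw [← Real.exp_eq_exp_ℝ, ← Real.exp_add] at h
  rw [show μ * (Real.exp t - 1) = -μ + μ * Real.exp t by ring]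
  refine (congrArg (HasSum · _) (funext fun x => ?_)).mpr h
  rw [poissonPMF, mul_pow, ← Real.exp_nat_mul, mul_comm t]
  ring

lemma poissonPMF_mul_exp_nonneg {μ : ℝ} (hμ : 0 ≤ μ) (t : ℝ) (x : ℕ) :
    0 ≤ poissonPMF μ x * Real.exp (t * x) := by
  unfold poissonPMF
  positivity

/-- The moment generating function of `X + Y` for a bivariate Poisson pair `(X, Y)`, factored
through the three independent Poisson components. -/
lemma hasSum_poissonPMF₂_mul_exp {μ₁ μ₂ μ₃ : ℝ} (a : ℝ) (h₃ : 0 ≤ μ₃) (h₁ : μ₃ ≤ μ₁)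
    (h₂ : μ₃ ≤ μ₂) :
    HasSum (fun q : ℕ × ℕ =>
      poissonPMF₂ μ₁ μ₂ μ₃ q.1 q.2 * Real.exp (a * ((q.1 : ℝ) + (q.2 : ℝ))))
      (Real.exp ((μ₁ - μ₃) * (Real.exp a - 1)) * Real.exp ((μ₂ - μ₃) * (Real.exp a - 1))
        * Real.exp (μ₃ * (Real.exp (2 * a) - 1))) := by
  have hU := hasSum_poissonPMF_mul_exp (μ₁ - μ₃) a
  have hV := hasSum_poissonPMF_mul_exp (μ₂ - μ₃) a
  have hJ := hasSum_poissonPMF_mul_exp μ₃ (2 * a)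
  have nU := poissonPMF_mul_exp_nonneg (sub_nonneg.2 h₁) a
  have nV := poissonPMF_mul_exp_nonneg (sub_nonneg.2 h₂) a
  have nJ := poissonPMF_mul_exp_nonneg h₃ (2 * a)
  have hUV := hU.mul hV (hU.summable.mul_of_nonneg hV.summable nU nV)
  have hT := hUV.mul hJ
    (hUV.summable.mul_of_nonneg hJ.summable (fun p => mul_nonneg (nU p.1) (nV p.2)) nJ)
  -- The change of variables `((u, v), j) ↦ ((u + j, v + j), j)` is injective with range
  -- `j ≤ min x y`; off its range the summand is extended by zero.
  let e : (ℕ × ℕ) × ℕ → (ℕ × ℕ) × ℕ := fun p => ((p.1.1 + p.2, p.1.2 + p.2), p.2)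
  have he : Function.Injective e := by
    rintro ⟨⟨u, v⟩, j⟩ ⟨⟨u', v'⟩, j'⟩ h
    simp only [e, Prod.mk.injEq] at h ⊢
    omega
  let G : (ℕ × ℕ) × ℕ → ℝ := fun p =>
    if p.2 ≤ min p.1.1 p.1.2 then
      poissonPMF (μ₁ - μ₃) (p.1.1 - p.2) * poissonPMF (μ₂ - μ₃) (p.1.2 - p.2) * poissonPMF μ₃ p.2
        * Real.exp (a * ((p.1.1 : ℝ) + (p.1.2 : ℝ)))
    else 0
  have hG : HasSum G (Real.exp ((μ₁ - μ₃) * (Real.exp a - 1))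
      * Real.exp ((μ₂ - μ₃) * (Real.exp a - 1)) * Real.exp (μ₃ * (Real.exp (2 * a) - 1))) := by
    rw [← he.hasSum_iff]
    · refine (congrArg (HasSum · _) (funext ?_)).mpr hT
      rintro ⟨⟨u, v⟩, j⟩
      have hexp : Real.exp (a * (((u + j : ℕ) : ℝ) + ((v + j : ℕ) : ℝ)))
          = Real.exp (a * u) * Real.exp (a * v) * Real.exp (2 * a * j) := by
        rw [← Real.exp_add, ← Real.exp_add]
        congr 1
        push_cast
        ring
      have hj : j ≤ min (u + j) (v + j) := by omega
      simp only [G, e, Function.comp_apply, if_pos hj, Nat.add_sub_cancel, hexp]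
      ring
    · rintro ⟨⟨x, y⟩, j⟩ hp
      refine if_neg fun (hj : j ≤ min x y) => hp ⟨((x - j, y - j), j), ?_⟩
      rw [le_min_iff] at hj
      simp only [e, Nat.sub_add_cancel hj.1, Nat.sub_add_cancel hj.2]
  refine hG.prod_fiberwise fun q => ?_
  have hfin : HasSum (fun j => G (q, j)) (∑ j ∈ Finset.range (min q.1 q.2 + 1), G (q, j)) :=
    hasSum_sum_of_ne_finset_zero fun j hj =>
      if_neg fun h => hj (Finset.mem_range.2 (Nat.lt_succ_iff.2 h))
  have hsum : poissonPMF₂ μ₁ μ₂ μ₃ q.1 q.2 * Real.exp (a * ((q.1 : ℝ) + (q.2 : ℝ)))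
      = ∑ j ∈ Finset.range (min q.1 q.2 + 1), G (q, j) := by
    rw [poissonPMF₂, Finset.sum_mul]
    refine Finset.sum_congr rfl fun j hj => ?_
    exact (if_pos (Nat.lt_succ_iff.1 (Finset.mem_range.1 hj))).symm
  rw [hsum]
  exact hfin

/-- covariance of exponentials under the bivariate Poisson distribution. -/
theorem bivariate_poisson_exp_covariance (μ₁ μ₂ μ₃ a : ℝ) (h₁ : 0 < μ₁) (h₂ : 0 < μ₂)
    (h₃ : 0 ≤ μ₃) (h₃' : μ₃ < min μ₁ μ₂) :
    Summable (fun q : ℕ × ℕ =>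
      poissonPMF₂ μ₁ μ₂ μ₃ q.1 q.2 * Real.exp (a * ((q.1 : ℝ) + (q.2 : ℝ)))) ∧
    Summable (fun x : ℕ => poissonPMF μ₁ x * Real.exp (a * x)) ∧
    Summable (fun y : ℕ => poissonPMF μ₂ y * Real.exp (a * y)) ∧
    (∑' q : ℕ × ℕ, poissonPMF₂ μ₁ μ₂ μ₃ q.1 q.2 * Real.exp (a * ((q.1 : ℝ) + (q.2 : ℝ))))
        - (∑' x : ℕ, poissonPMF μ₁ x * Real.exp (a * x))
          * (∑' y : ℕ, poissonPMF μ₂ y * Real.exp (a * y))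
      = Real.exp ((Real.exp a - 1) * (μ₁ + μ₂))
          * (Real.exp ((Real.exp a - 1) ^ 2 * μ₃) - 1) := by
  have H := hasSum_poissonPMF₂_mul_exp a h₃ (h₃'.le.trans (min_le_left _ _))
    (h₃'.le.trans (min_le_right _ _))
  have H₁ := hasSum_poissonPMF_mul_exp μ₁ a
  have H₂ := hasSum_poissonPMF_mul_exp μ₂ a
  refine ⟨H.summable, H₁.summable, H₂.summable, ?_⟩
  have hsq : Real.exp (2 * a) = Real.exp a ^ 2 := by
    rw [← Real.exp_nat_mul]
    norm_num
  rw [H.tsum_eq, H₁.tsum_eq, H₂.tsum_eq, hsq,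
    mul_sub (Real.exp ((Real.exp a - 1) * (μ₁ + μ₂))), mul_one]
  simp only [← Real.exp_add]
  congr 2
  all_goals ring
end

section
/- Let a ∈ ℝ, a ≠ 0, and μ > 0. Then lim_{M→∞} exp{(e^{a/√M} − 1 − a/√M) μ M} · √M (e^{a/√M} − 1) = a e^{a² μ / 2}, where the limit is taken over real M → ∞; moreover a e^{a² μ / 2} = μ^{-1} E[e^{a Z} Z], where Z is a centered Gaussian random variable with variance μ (the expectation being the integral of z e^{a z} against the Gaussian measure N(0, μ) on ℝ). -/
/-!
Put `t = a / √M`, which tends to `0` through nonzero values, so that `M = (a / t) ^ 2`. The exponent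
is `((eᵗ - 1 - t) / t ^ 2) * a ^ 2 * μ` and the second factor is `a * ((eᵗ - 1) / t)`; the Taylor
expansion of `exp` at `0` gives their limits `a ^ 2 * μ / 2` and `a`.
For the Gaussian moment, `E[Z e^{aZ}]` is the derivative at `a` of the moment generating function
`t ↦ e^{μ t ^ 2 / 2}`, namely `μ a e^{μ a ^ 2 / 2}`.
-/

open MeasureTheory ProbabilityTheory Filter Topology

lemma tendsto_exp_sub_one_div :
    Tendsto (fun t : ℝ => (Real.exp t - 1) / t) (𝓝[≠] 0) (𝓝 1) := by
  have h := (Real.hasDerivAt_exp 0).tendsto_slope_zero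
  simpa [div_eq_inv_mul] using h

lemma tendsto_exp_sub_one_sub_id_div_sq :
    Tendsto (fun t : ℝ => (Real.exp t - 1 - t) / t ^ 2) (𝓝[≠] 0) (𝓝 (1 / 2)) := by
  have h := (Real.exp_sub_sum_range_succ_isLittleO_pow 2).tendsto_div_nhds_zero
  have h2 := (h.mono_left (nhdsWithin_le_nhds (s := {0}ᶜ))).add_const (1 / 2 : ℝ)
  rw [zero_add] at h2
  refine h2.congr' ?_
  filter_upwards [self_mem_nhdsWithin] with t ht
  have ht' : t ≠ 0 := ht
  simp only [Finset.sum_range_succ, Finset.sum_range_zero, Nat.factorial]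
  field_simp
  push_cast
  ring

lemma integral_exp_mul_mul_id_gaussianReal (a μ : ℝ) (hμ : 0 < μ) :
    ∫ z : ℝ, Real.exp (a * z) * z ∂(gaussianReal 0 μ.toNNReal)
      = μ * (a * Real.exp (a ^ 2 * μ / 2)) := by
  have h := hasDerivAt_mgf (X := fun x : ℝ => x) (μ := gaussianReal 0 μ.toNNReal) (t := a)
    (by simp)
  rw [mgf_fun_id_gaussianReal] at h
  have h2 : HasDerivAt (fun t : ℝ => Real.exp (0 * t + (μ.toNNReal : ℝ) * t ^ 2 / 2))
      (μ * (a * Real.exp (a ^ 2 * μ / 2))) a := by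
    rw [Real.coe_toNNReal _ hμ.le]
    have h3 : HasDerivAt (fun t : ℝ => 0 * t + μ * t ^ 2 / 2) (μ * a) a := by
      convert! ((hasDerivAt_id a).const_mul 0).add
        (((hasDerivAt_pow 2 a).const_mul μ).div_const 2) using 1
      simp
      ring
    convert! h3.exp using 1
    ring_nf
  rw [← h.unique h2]
  exact integral_congr_ae (ae_of_all _ fun z => mul_comm _ _)

/-- limit of the rescaled first Charlier coefficient of the
exponential function, and its identification as a Gaussian moment. -/
theorem exp_first_coefficient_limit (a μ : ℝ) (ha : a ≠ 0) (hμ : 0 < μ) :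
    Tendsto (fun M : ℝ =>
        Real.exp ((Real.exp (a / Real.sqrt M) - 1 - a / Real.sqrt M) * μ * M)
          * (Real.sqrt M * (Real.exp (a / Real.sqrt M) - 1)))
      atTop (𝓝 (a * Real.exp (a ^ 2 * μ / 2))) ∧
    a * Real.exp (a ^ 2 * μ / 2)
      = μ⁻¹ * ∫ z : ℝ, Real.exp (a * z) * z ∂(gaussianReal 0 μ.toNNReal) := by
  constructor
  · have ht : Tendsto (fun M : ℝ => a / Real.sqrt M) atTop (𝓝[≠] 0) := by
      refine tendsto_nhdsWithin_iff.2 ⟨Real.tendsto_sqrt_atTop.const_div_atTop a, ?_⟩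
      filter_upwards [eventually_gt_atTop 0] with M hM
      exact div_ne_zero ha (Real.sqrt_pos.2 hM).ne'
    have h1 := (Real.continuous_exp.tendsto _).comp
      ((tendsto_exp_sub_one_sub_id_div_sq.comp ht).mul_const (a ^ 2 * μ))
    have h2 := (tendsto_exp_sub_one_div.comp ht).const_mul a
    have h3 := h1.mul h2
    rw [show Real.exp (1 / 2 * (a ^ 2 * μ)) * (a * 1) = a * Real.exp (a ^ 2 * μ / 2) by
      rw [mul_one, mul_comm]; ring_nf] at h3
    refine h3.congr' ?_
    filter_upwards [eventually_gt_atTop 0] with M hM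
    have hs : Real.sqrt M ≠ 0 := (Real.sqrt_pos.2 hM).ne'
    simp only [Function.comp_apply]
    congr 1
    · congr 1
      rw [div_pow, Real.sq_sqrt hM.le]
      field_simp
    · field_simp
  · rw [integral_exp_mul_mul_id_gaussianReal a μ hμ, inv_mul_cancel_left₀ hμ.ne']
end
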